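/- arXiv:2404.02069 — 3 statements merged into one kernel-verified Lean document; each statement's English description precedes it below -/
import Mathlib

section
/- Let n = n_1 + … + n_p with n_1,…,n_p nonnegative integers (p ≥ 1), let A ⊆ ℕ^n, and let ω_A(t_1,…,t_p) be the dimension polynomial of A, i.e., the numerical polynomial satisfying ω_A(r_1,…,r_p) = Card V_A(r_1,…,r_p) for all sufficiently large (r_1,…,r_p) ∈ ℕ^p. Then the total degree of ω_A equals n if and only if A is empty, and in that case ω_A(t_1,…,t_p) = ∏_{i=1}^{p} C(t_i+n_i, n_i). -/
open MvPolynomial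

/-- A polynomial in `p` variables with rational coefficients is numerical if it takes
integer values for all sufficiently large integer arguments. -/
def IsNumerical {p : ℕ} (f : MvPolynomial (Fin p) ℚ) : Prop :=
  ∃ s : Fin p → ℤ, ∀ r : Fin p → ℤ, (∀ i, s i ≤ r i) →
    ∃ z : ℤ, MvPolynomial.eval (fun i => (r i : ℚ)) f = (z : ℚ)

/-- The binomial-coefficient polynomial `C(t_j + c, k)` in the variable `t_j`. -/
noncomputable def binomShift {p : ℕ} (j : Fin p) (c : ℤ) (k : ℕ) : MvPolynomial (Fin p) ℚ :=
  (k.factorial : ℚ)⁻¹ • ∏ l ∈ Finset.range k, (X j + MvPolynomial.C ((c : ℚ) - (l : ℚ)))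

/-- The sum of the entries of `v` over the `j`-th block of the partition `B`. -/
def blockSum {n p : ℕ} (B : Fin n → Fin p) (v : Fin n → ℕ) (j : Fin p) : ℕ :=
  ∑ i ∈ Finset.univ.filter (fun i => B i = j), v i

/-- `V_A`: the set of points of `ℕ^n` that are not ≥ (componentwise) any element of `A`. -/
def VSet {n : ℕ} (A : Set (Fin n → ℕ)) : Set (Fin n → ℕ) :=
  {v | ∀ a ∈ A, ¬ a ≤ v}

/-!
A dimension polynomial is determined by its values at large natural points. If `A = ∅`, then
`V_A(r)` is the set of all points whose block sums are bounded by `r`, and counting it block by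
block gives `∏ C(r_j + n_j, n_j)`. If `a ∈ A`, then every `v ∈ V_A(r)` has a coordinate `v i < a i`,
so `Card V_A(r) = O((1 + ∑ r_j) ^ (n - 1))`. A polynomial `f` with this growth has total degree at
most `n - 1`: restricted to a line `t ↦ t • c` on which the leading form of `f` does not vanish, it
becomes a univariate polynomial of degree `totalDegree f`.
-/

open Filter Asymptotics
open scoped Finset

section TotalDegree

variable {σ R : Type*}

theorem totalDegree_X_add_C [CommSemiring R] [Nontrivial R] (i : σ) (c : R) :
    (X i + C c : MvPolynomial σ R).totalDegree = 1 := by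
  rw [totalDegree_add_eq_left_of_totalDegree_lt] <;> simp

theorem X_add_C_ne_zero [CommSemiring R] [Nontrivial R] (i : σ) (c : R) :
    (X i + C c : MvPolynomial σ R) ≠ 0 := by
  intro h
  simpa [h] using totalDegree_X_add_C i c

theorem totalDegree_prod_of_isDomain [CommRing R] [IsDomain R] {ι : Type*} (s : Finset ι)
    (f : ι → MvPolynomial σ R) (hf : ∀ i ∈ s, f i ≠ 0) :
    (∏ i ∈ s, f i).totalDegree = ∑ i ∈ s, (f i).totalDegree := by
  induction s using Finset.cons_induction with
  | empty => simp
  | cons a s ha ih =>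
    rw [Finset.forall_mem_cons] at hf
    rw [Finset.prod_cons, Finset.sum_cons,
      totalDegree_mul_of_isDomain hf.1 (Finset.prod_ne_zero_iff.2 hf.2), ih hf.2]

theorem homogeneousComponent_totalDegree_ne_zero [CommSemiring R] {f : MvPolynomial σ R}
    (hf : f ≠ 0) : homogeneousComponent f.totalDegree f ≠ 0 := by
  obtain ⟨d, hd, hdeg⟩ := Finset.exists_mem_eq_sup f.support (support_nonempty.2 hf)
    (fun m => m.sum fun _ e => e)
  have hmem : d ∈ (homogeneousComponent f.totalDegree f).support := by
    rw [support_homogeneousComponent, Finset.mem_filter]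
    exact ⟨hd, hdeg.symm⟩
  exact support_nonempty.1 ⟨d, hmem⟩

end TotalDegree

section LineRestriction

variable {σ R : Type*} [CommSemiring R]

/-- The univariate polynomial `f (c t)` in `t`: the restriction of `f` to the line through the
origin with direction `c`, used to read off the total degree of `f` from its growth. -/
noncomputable def lineRestriction (c : σ → R) (f : MvPolynomial σ R) : Polynomial R :=
  aeval (fun i => Polynomial.C (c i) * Polynomial.X) f

theorem eval_lineRestriction (c : σ → R) (f : MvPolynomial σ R) (t : R) :
    (lineRestriction c f).eval t = eval (fun i => c i * t) f := by
  rw [lineRestriction, ← Polynomial.coe_aeval_eq_eval, comp_aeval_apply]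
  simp [aeval_eq_eval]

theorem coeff_lineRestriction (c : σ → R) (f : MvPolynomial σ R) (k : ℕ) :
    (lineRestriction c f).coeff k = eval c (homogeneousComponent k f) := by
  induction f using MvPolynomial.induction_on' with
  | monomial d a =>
    have hline : lineRestriction c (monomial d a) =
        Polynomial.C (eval c (monomial d a)) * Polynomial.X ^ d.degree := by
      simp only [lineRestriction, aeval_monomial, eval_monomial, mul_pow, Finsupp.prod_mul,
        ← map_pow, Polynomial.algebraMap_eq, map_mul, mul_assoc]
      simp [Finsupp.prod, Finset.prod_pow_eq_pow_sum, Finsupp.degree_apply]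
    rw [hline, Polynomial.coeff_C_mul_X_pow,
      homogeneousComponent_of_mem (isHomogeneous_monomial a rfl)]
    split_ifs <;> simp
  | add f g hf hg =>
    simp only [lineRestriction, map_add, Polynomial.coeff_add] at hf hg ⊢
    rw [hf, hg]

end LineRestriction

section Growth

theorem eq_of_eventually_eval_natCast_eq {σ R : Type*} [CommRing R] [IsDomain R] [CharZero R]
    {f g : MvPolynomial σ R}
    (h : ∀ᶠ r : σ → ℕ in atTop, eval (fun i => (r i : R)) f = eval (fun i => (r i : R)) g) :
    f = g := by
  obtain ⟨s, hs⟩ := eventually_atTop.1 h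
  refine funext_set (fun i => Nat.cast '' Set.Ici (s i))
    (fun i => (Set.Ici_infinite (s i)).image Nat.cast_injective.injOn) fun x hx => ?_
  choose r hsr hrx using fun i => hx i (Set.mem_univ i)
  obtain rfl : (fun i => (r i : R)) = x := funext hrx
  exact hs r hsr

variable {K : Type*} [NormedField K] [LinearOrder K] [IsStrictOrderedRing K] [OrderTopology K]
  [Archimedean K]

theorem degree_le_of_isBigO_natCast {P Q : Polynomial K}
    (h : (fun t : ℕ => P.eval (t : K)) =O[atTop] fun t : ℕ => Q.eval (t : K)) :
    P.degree ≤ Q.degree := by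
  by_contra! hlt
  have hroot : ∀ᶠ t : ℕ in atTop, P.eval (t : K) ≠ 0 :=
    tendsto_natCast_atTop_atTop.eventually
      (P.eventually_atTop_not_isRoot (Polynomial.ne_zero_of_degree_gt hlt))
  exact h.not_isLittleO hroot.frequently
    ((Q.isLittleO_atTop_of_degree_lt P hlt).comp_tendsto tendsto_natCast_atTop_atTop)

theorem totalDegree_le_of_isBigO_natCast {σ : Type*} [Fintype σ] {f : MvPolynomial σ K} {d : ℕ}
    (h : (fun r : σ → ℕ => eval (fun i => (r i : K)) f) =O[atTop]
      fun r => (1 + ∑ i, (r i : K)) ^ d) :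
    f.totalDegree ≤ d := by
  rcases eq_or_ne f 0 with rfl | hf
  · simp
  obtain ⟨c, hc, hcpos⟩ : ∃ c : σ → ℕ,
      eval (fun i => (c i : K)) (homogeneousComponent f.totalDegree f) ≠ 0 ∧ 1 ≤ c := by
    have hfreq : ∃ᶠ c : σ → ℕ in atTop,
        eval (fun i => (c i : K)) (homogeneousComponent f.totalDegree f) ≠ 0 := fun hzero =>
      homogeneousComponent_totalDegree_ne_zero hf
        (eq_of_eventually_eval_natCast_eq (by simpa using hzero))
    exact (hfreq.and_eventually (eventually_ge_atTop 1)).exists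
  have hline : Tendsto (fun t i => c i * t : ℕ → σ → ℕ) atTop atTop :=
    tendsto_atTop.2 fun b => by
      filter_upwards [eventually_ge_atTop (∑ i, b i)] with t ht i
      exact (Finset.single_le_sum (fun _ _ => Nat.zero_le _) (Finset.mem_univ i)).trans
        (ht.trans (Nat.le_mul_of_pos_left t (hcpos i)))
  let Q : Polynomial K := (1 + Polynomial.C (∑ i, (c i : K)) * Polynomial.X) ^ d
  have hQ : Q.degree ≤ d := by
    dsimp only [Q]
    compute_degree
    exact le_rfl
  have hdeg : (lineRestriction (fun i => (c i : K)) f).degree ≤ Q.degree := by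
    refine degree_le_of_isBigO_natCast ?_
    have hQeval (t : K) : Q.eval t = (1 + ∑ i, c i * t) ^ d := by
      simp [Q, Finset.sum_mul, Polynomial.eval_finsetSum]
    simpa only [Function.comp_def, eval_lineRestriction, hQeval, Nat.cast_mul]
      using h.comp_tendsto hline
  have hlead : (f.totalDegree : WithBot ℕ) ≤ (lineRestriction (fun i => (c i : K)) f).degree :=
    Polynomial.le_degree_of_ne_zero (by rwa [coeff_lineRestriction])
  exact_mod_cast hlead.trans (hdeg.trans hQ)

end Growth

section BinomShift

variable {p : ℕ} (j : Fin p)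

theorem eval_binomShift_natCast (k : ℕ) (r : Fin p → ℕ) :
    eval (fun i => (r i : ℚ)) (binomShift j k k) = (r j + k).choose k := by
  rw [binomShift, smul_eval, map_prod, Nat.cast_choose_eq_descPochhammer_div,
    descPochhammer_eval_eq_prod_range, div_eq_inv_mul]
  simp [add_sub_assoc]

theorem binomShift_ne_zero (c : ℤ) (k : ℕ) : binomShift j c k ≠ 0 :=
  smul_ne_zero (inv_ne_zero (Nat.cast_ne_zero.2 k.factorial_ne_zero))
    (Finset.prod_ne_zero_iff.2 fun _ _ => X_add_C_ne_zero j _)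

theorem totalDegree_binomShift (c : ℤ) (k : ℕ) : (binomShift j c k).totalDegree = k := by
  have hne := binomShift_ne_zero j c k
  rw [binomShift, smul_eq_C_mul] at hne ⊢
  rw [totalDegree_mul_of_isDomain (left_ne_zero_of_mul hne) (right_ne_zero_of_mul hne),
    totalDegree_prod_of_isDomain _ _ fun _ _ => X_add_C_ne_zero j _]
  simp only [totalDegree_C, totalDegree_X_add_C, Finset.sum_const, Finset.card_range, smul_eq_mul,
    mul_one, zero_add]

end BinomShift

section Counting

variable {ι κ : Type*} [Fintype ι]

-- The slack `r - ∑ i, v i` becomes the coordinate of an added index.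
theorem ncard_setOf_sum_le (r : ℕ) :
    {v : ι → ℕ | ∑ i, v i ≤ r}.ncard = (r + Fintype.card ι).choose (Fintype.card ι) := by
  let addSlack : {v : ι → ℕ | ∑ i, v i ≤ r} ≃ {w : Option ι → ℕ // ∑ o, w o = r} :=
    { toFun v := ⟨fun o => o.elim (r - ∑ i, v.1 i) v.1, by
        simpa [Fintype.sum_option] using Nat.sub_add_cancel v.2⟩
      invFun w := ⟨fun i => w.1 (some i), by
        have hw := w.2
        rw [Fintype.sum_option] at hw
        exact le_of_add_le_right hw.le⟩
      left_inv _ := rfl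
      right_inv w := by
        have hw := w.2
        rw [Fintype.sum_option] at hw
        ext (_ | i)
        · exact Nat.sub_eq_of_eq_add hw.symm
        · rfl }
  classical
  rw [← Nat.card_coe_set_eq,
    Nat.card_congr (addSlack.trans (Sym.equivNatSumOfFintype (Option ι) r).symm),
    Nat.card_eq_fintype_card, Sym.card_sym_eq_choose, Fintype.card_option,
    Nat.add_right_comm, Nat.add_sub_cancel, Nat.add_comm, Nat.choose_symm_add]

theorem ncard_setOf_fiber_sum_le [Fintype κ] [DecidableEq κ] (b : ι → κ) (r : κ → ℕ) :
    {v : ι → ℕ | ∀ j, ∑ i with b i = j, v i ≤ r j}.ncard =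
      ∏ j, (r j + #{i | b i = j}).choose #{i | b i = j} := by
  let splitFibers : (ι → ℕ) ≃ ∀ j, {i // b i = j} → ℕ :=
    ((Equiv.sigmaFiberEquiv b).symm.arrowCongr (Equiv.refl ℕ)).trans (Equiv.piCurry fun _ _ => ℕ)
  let e : {v : ι → ℕ | ∀ j, ∑ i with b i = j, v i ≤ r j} ≃
      ∀ j, {w : {i // b i = j} → ℕ | ∑ i, w i ≤ r j} :=
    (splitFibers.subtypeEquiv fun v => forall_congr' fun j => by
      rw [Finset.sum_subtype _ (p := fun i => b i = j) (by simp)]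
      rfl).trans Equiv.subtypePiEquivPi
  simp only [← Nat.card_coe_set_eq, Nat.card_congr e, Nat.card_pi]
  simp only [Nat.card_coe_set_eq, ncard_setOf_sum_le, Fintype.card_subtype]

theorem ncard_setOf_not_le_and_lt_le (a : ι → ℕ) (N : ℕ) :
    {v : ι → ℕ | ¬a ≤ v ∧ ∀ i, v i < N}.ncard ≤ (∑ i, a i) * N ^ (Fintype.card ι - 1) := by
  classical
  let slab (i : ι) : Finset (ι → ℕ) :=
    Fintype.piFinset (Function.update (fun _ => Finset.range N) i (Finset.range (a i)))
  have hcard (i : ι) : #(slab i) = a i * N ^ (Fintype.card ι - 1) := by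
    rw [Fintype.card_piFinset, ← Finset.mul_prod_erase _ _ (Finset.mem_univ i),
      Finset.prod_congr rfl fun l hl => by
        rw [Function.update_of_ne (Finset.ne_of_mem_erase hl)]]
    simp
  have hcover : {v : ι → ℕ | ¬a ≤ v ∧ ∀ i, v i < N} ⊆ Finset.univ.biUnion slab := by
    rintro v ⟨hav, hvN⟩
    obtain ⟨i, hi⟩ : ∃ i, v i < a i := by simpa [Pi.le_def] using hav
    refine Finset.mem_coe.2 (Finset.mem_biUnion.2 ⟨i, Finset.mem_univ i, ?_⟩)
    refine Fintype.mem_piFinset.2 fun l => ?_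
    rcases eq_or_ne l i with rfl | hl
    · simpa using hi
    · simpa [hl] using hvN l
  calc _ ≤ #(Finset.univ.biUnion slab) :=
        (Set.ncard_le_ncard hcover (Finset.finite_toSet _)).trans_eq (Set.ncard_coe_finset _)
    _ ≤ ∑ i, #(slab i) := Finset.card_biUnion_le
    _ = _ := by simp only [hcard, Finset.sum_mul]

end Counting

section DimensionPolynomial

variable {n p : ℕ} {B : Fin n → Fin p} {A : Set (Fin n → ℕ)} {ω : MvPolynomial (Fin p) ℚ}

/-- `ω` is the dimension polynomial of `A` for the partition of the coordinates into the fibers of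
`B`, i.e. `ω(r) = Card V_A(r)` for all sufficiently large `r ∈ ℕ^p`. The fibers need not be
intervals. -/
def IsDimensionPolynomial (B : Fin n → Fin p) (A : Set (Fin n → ℕ))
    (ω : MvPolynomial (Fin p) ℚ) : Prop :=
  ∀ᶠ r : Fin p → ℕ in atTop, eval (fun j => (r j : ℚ)) ω =
    ({v ∈ VSet A | ∀ j, blockSum B v j ≤ r j} : Set (Fin n → ℕ)).ncard

theorem le_sum_of_blockSum_le {v : Fin n → ℕ} {r : Fin p → ℕ} (h : ∀ j, blockSum B v j ≤ r j)
    (i : Fin n) : v i ≤ ∑ j, r j :=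
  calc v i ≤ blockSum B v (B i) :=
        Finset.single_le_sum (f := v) (fun _ _ => Nat.zero_le _) (by simp)
    _ ≤ r (B i) := h (B i)
    _ ≤ ∑ j, r j := Finset.single_le_sum (fun _ _ => Nat.zero_le _) (Finset.mem_univ _)

theorem ncard_VSet_blockSum_le {a : Fin n → ℕ} (ha : a ∈ A) (r : Fin p → ℕ) :
    ({v ∈ VSet A | ∀ j, blockSum B v j ≤ r j} : Set (Fin n → ℕ)).ncard ≤
      (∑ i, a i) * (1 + ∑ j, r j) ^ (n - 1) := by
  have hfin : {v : Fin n → ℕ | ¬a ≤ v ∧ ∀ i, v i < 1 + ∑ j, r j}.Finite :=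
    (Set.finite_Iic fun _ => ∑ j, r j).subset fun v hv i => Nat.lt_one_add_iff.1 (hv.2 i)
  refine (Set.ncard_le_ncard (fun v hv => ?_) hfin).trans
    (by simpa using ncard_setOf_not_le_and_lt_le a (1 + ∑ j, r j))
  exact ⟨hv.1 a ha, fun i => Nat.lt_one_add_iff.2 (le_sum_of_blockSum_le hv.2 i)⟩

theorem IsDimensionPolynomial.totalDegree_le (hω : IsDimensionPolynomial B A ω)
    (hA : A.Nonempty) : ω.totalDegree ≤ n - 1 := by
  obtain ⟨a, ha⟩ := hA
  refine totalDegree_le_of_isBigO_natCast (IsBigO.of_bound (∑ i, a i : ℕ) ?_)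
  filter_upwards [hω] with r hr
  rw [hr]
  have hnorm (m : ℕ) : ‖(m : ℚ)‖ = m := by simpa using Int.norm_cast_rat m
  have hcast : (1 + ∑ j, (r j : ℚ)) ^ (n - 1) = ((1 + ∑ j, r j) ^ (n - 1) : ℕ) := by push_cast; rfl
  rw [hcast, hnorm, hnorm]
  exact_mod_cast ncard_VSet_blockSum_le ha r

theorem IsDimensionPolynomial.eq_prod_binomShift (hω : IsDimensionPolynomial B ∅ ω) :
    ω = ∏ j, binomShift j #{i | B i = j} #{i | B i = j} := by
  refine eq_of_eventually_eval_natCast_eq ?_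
  filter_upwards [hω] with r hr
  have hV : ({v ∈ VSet ∅ | ∀ j, blockSum B v j ≤ r j} : Set (Fin n → ℕ)) =
      {v | ∀ j, ∑ i with B i = j, v i ≤ r j} := by
    simp [VSet, blockSum]
  rw [hr, hV, ncard_setOf_fiber_sum_le, map_prod, Nat.cast_prod]
  simp only [eval_binomShift_natCast]

theorem totalDegree_prod_binomShift_card_fiber (B : Fin n → Fin p) :
    (∏ j, binomShift j #{i | B i = j} #{i | B i = j}).totalDegree = n := by
  rw [totalDegree_prod_of_isDomain _ _ fun _ _ => binomShift_ne_zero _ _ _]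
  simp only [totalDegree_binomShift]
  rw [← Finset.card_eq_sum_card_fiberwise fun _ _ => Finset.mem_univ _, Finset.card_fin]

end DimensionPolynomial

theorem statement_2_general {n p : ℕ} (hn : 0 < n) {B : Fin n → Fin p} {A : Set (Fin n → ℕ)}
    {ω : MvPolynomial (Fin p) ℚ} (hω : IsDimensionPolynomial B A ω) :
    (ω.totalDegree = n ↔ A = ∅) ∧
    (A = ∅ → ω = ∏ j, binomShift j #{i | B i = j} #{i | B i = j}) := by
  have hprod : A = ∅ → ω = ∏ j, binomShift j #{i | B i = j} #{i | B i = j} := by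
    rintro rfl
    exact hω.eq_prod_binomShift
  refine ⟨⟨fun hdeg => ?_, fun hA => ?_⟩, hprod⟩
  · by_contra hA
    have := hω.totalDegree_le (Set.nonempty_iff_ne_empty.2 hA)
    omega
  · rw [hprod hA, totalDegree_prod_binomShift_card_fiber]

theorem statement_2 (p n : ℕ) (hp : 1 ≤ p) (hn0 : 0 < n)
    (nn : Fin p → ℕ) (hn : ∑ j, nn j = n)
    (B : Fin n → Fin p) (hBmono : Monotone B)
    (hBcard : ∀ j, (Finset.univ.filter fun i => B i = j).card = nn j)
    (A : Set (Fin n → ℕ))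
    (ω : MvPolynomial (Fin p) ℚ) (hω : IsNumerical ω)
    (hagree : ∃ s : Fin p → ℕ, ∀ r : Fin p → ℕ, (∀ i, s i ≤ r i) →
      MvPolynomial.eval (fun i => ((r i : ℤ) : ℚ)) ω =
        (({v ∈ VSet A | ∀ j, blockSum B v j ≤ r j} : Set (Fin n → ℕ)).ncard : ℚ)) :
    (ω.totalDegree = n ↔ A = ∅) ∧
    (A = ∅ → ω = ∏ i, binomShift i (nn i : ℤ) (nn i)) := by
  have hdim : IsDimensionPolynomial B A ω :=
    eventually_atTop.2 (by simpa only [Int.cast_natCast, Pi.le_def] using hagree)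
  simpa only [hBcard] using statement_2_general hn0 hdim
end

section
/- Let K be a field of characteristic zero, A_n(K) the Weyl algebra, and M a finitely generated left A_n(K)-module with generators g_1,…,g_p, filtered by M_r = Σ_{i=1}^{p} W_r g_i. Then there exists a polynomial ψ_M(t) ∈ ℚ[t] such that ψ_M(r) = dim_K M_r for all sufficiently large r ∈ ℤ, and n ≤ deg ψ_M ≤ 2n. -/
set_option synthInstance.maxHeartbeats 400000
set_option maxHeartbeats 1000000

open MvPolynomial

noncomputable def weylGens (n : ℕ) (K : Type) [Field K] :
    Set (Module.End K (MvPolynomial (Fin n) K)) :=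
  (Set.range fun i : Fin n =>
      (LinearMap.mulLeft K (X i : MvPolynomial (Fin n) K) : Module.End K (MvPolynomial (Fin n) K))) ∪
  (Set.range fun i : Fin n => ((pderiv i).toLinearMap : Module.End K (MvPolynomial (Fin n) K)))

noncomputable def WeylAlg (n : ℕ) (K : Type) [Field K] :
    Subalgebra K (Module.End K (MvPolynomial (Fin n) K)) :=
  Algebra.adjoin K (weylGens n K)

noncomputable def wx (n : ℕ) (K : Type) [Field K] (i : Fin n) : WeylAlg n K :=
  ⟨LinearMap.mulLeft K (X i), Algebra.subset_adjoin (Set.mem_union_left _ ⟨i, rfl⟩)⟩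

noncomputable def wd (n : ℕ) (K : Type) [Field K] (i : Fin n) : WeylAlg n K :=
  ⟨(pderiv i).toLinearMap, Algebra.subset_adjoin (Set.mem_union_right _ ⟨i, rfl⟩)⟩

noncomputable def wMono (n : ℕ) (K : Type) [Field K] (α β : Fin n → ℕ) : WeylAlg n K :=
  (((List.finRange n).map fun i => wx n K i ^ α i).prod) *
  (((List.finRange n).map fun i => wd n K i ^ β i).prod)

def ordTot (n : ℕ) (α β : Fin n → ℕ) : ℕ := (∑ i, α i) + ∑ i, β i

noncomputable def bernW (n : ℕ) (K : Type) [Field K] (r : ℤ) : Submodule K (WeylAlg n K) :=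
  Submodule.span K {D | ∃ α β : Fin n → ℕ, (ordTot n α β : ℤ) ≤ r ∧ D = wMono n K α β}

noncomputable def modFil (n : ℕ) (K : Type) [Field K] (M : Type) [AddCommGroup M]
    [Module K M] [Module (WeylAlg n K) M] (m : ℕ) (g : Fin m → M) (r : ℤ) :
    Submodule K M :=
  Submodule.span K {x | ∃ i, ∃ D ∈ bernW n K r, x = D • g i}

/-!
Normal ordering identifies `W_r` with the polynomials of degree at most `r` in `2n` commuting
variables. Among the vectors `x^α ∂^β gᵢ`, those that are not combinations of earlier ones, in the
degree-lexicographic order, form bases of all the `M_r` at once. Multiplying a vector by some `x_j`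
or `∂_j` raises its exponent up to terms of lower order, so for each generator the discarded
exponents are closed upwards. By Dickson's lemma and inclusion–exclusion the remaining ones of
degree at most `r` are eventually counted by a polynomial in `r` of degree at most `2n`.

For the lower bound (Bernstein's inequality), commuting an operator of order `r` with the `∂_j` and
the `x_j` differentiates its polynomial, up to sign. By induction on `r` a nonzero `D ∈ W_r` does
not annihilate `M_r`, hence `W_r` embeds into `Hom_K(M_r, M_{2r})` and
`(r + 2n).choose (2n) ≤ dim M_r * dim M_{2r}`. The right-hand side grows like `r ^ (2 deg ψ)`.
-/

open Filter

section EventuallyPolynomial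

/-- The sequences that agree, from some index on, with a rational polynomial of degree at most
`d`; the Hilbert functions below are of this kind. They form a subspace of `ℕ → ℚ`. -/
def eventuallyPolynomial (d : ℕ) : Submodule ℚ (ℕ → ℚ) where
  carrier := {f | ∃ p : Polynomial ℚ, p.natDegree ≤ d ∧ ∀ᶠ r : ℕ in atTop, f r = p.eval (r : ℚ)}
  zero_mem' := ⟨0, by simp⟩
  add_mem' := by
    rintro f g ⟨p, hp, hfp⟩ ⟨q, hq, hgq⟩
    refine ⟨p + q, Polynomial.natDegree_add_le_of_degree_le hp hq, ?_⟩
    filter_upwards [hfp, hgq] with r hf hg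
    simp [hf, hg]
  smul_mem' := by
    rintro c f ⟨p, hp, hfp⟩
    refine ⟨c • p, (Polynomial.natDegree_smul_le c p).trans hp, ?_⟩
    filter_upwards [hfp] with r hf
    simp [hf]

theorem choose_sub_add_mem_eventuallyPolynomial {f : ℕ → ℕ} (d b : ℕ)
    (hf : ∀ r, b ≤ r → f r = (r - b + d).choose d) :
    (fun r ↦ (f r : ℚ)) ∈ eventuallyPolynomial d := by
  refine ⟨Polynomial.preHilbertPoly ℚ d b, (Polynomial.natDegree_preHilbertPoly ℚ d b).le, ?_⟩
  filter_upwards [eventually_ge_atTop b] with r hr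
  rw [hf r hr, Polynomial.preHilbertPoly_eq_choose_sub_add ℚ d hr]

theorem natDegree_le_of_eval_natCast_isBigO {𝕜 : Type*} [NormedField 𝕜] [LinearOrder 𝕜]
    [IsStrictOrderedRing 𝕜] [OrderTopology 𝕜] [Archimedean 𝕜] {P Q : Polynomial 𝕜}
    (h : (fun r : ℕ ↦ P.eval (r : 𝕜)) =O[atTop] fun r : ℕ ↦ Q.eval (r : 𝕜)) :
    P.natDegree ≤ Q.natDegree := by
  by_contra! hlt
  have hcast : Tendsto (Nat.cast : ℕ → 𝕜) atTop atTop := tendsto_natCast_atTop_atTop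
  have hP : P ≠ 0 := by rintro rfl; simp at hlt
  have hroot : ∀ᶠ r : ℕ in atTop, P.eval (r : 𝕜) ≠ 0 :=
    hcast.eventually (Polynomial.eventually_atTop_not_isRoot P hP)
  have hQP : (fun r : ℕ ↦ Q.eval (r : 𝕜)) =o[atTop] fun r : ℕ ↦ P.eval (r : 𝕜) :=
    (Polynomial.isLittleO_atTop_of_degree_lt Q P
      (Polynomial.degree_lt_degree hlt)).comp_tendsto hcast
  exact Asymptotics.isLittleO_irrefl hroot.frequently (h.trans_isLittleO hQP)

theorem le_two_mul_natDegree_of_choose_le {d : ℕ} {p : Polynomial ℚ}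
    (h : ∀ᶠ r : ℕ in atTop,
      ((r + d).choose d : ℚ) ≤ p.eval (r : ℚ) * p.eval ((2 * r : ℕ) : ℚ)) :
    d ≤ 2 * p.natDegree := by
  let Q : Polynomial ℚ := p * p.comp (Polynomial.C 2 * Polynomial.X)
  have hPQ : (fun r : ℕ ↦ (Polynomial.preHilbertPoly ℚ d 0).eval (r : ℚ)) =O[atTop]
      fun r : ℕ ↦ Q.eval (r : ℚ) := by
    refine .of_bound 1 ?_
    filter_upwards [h] with r hr
    rw [one_mul, Polynomial.preHilbertPoly_eq_choose_sub_add ℚ d r.zero_le, tsub_zero]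
    simp only [Q, Polynomial.eval_mul, Polynomial.eval_comp, Polynomial.eval_C, Polynomial.eval_X]
    push_cast at hr
    exact norm_le_norm_of_abs_le_abs (abs_le_abs_of_nonneg (by positivity) hr)
  calc d = (Polynomial.preHilbertPoly ℚ d 0).natDegree :=
        (Polynomial.natDegree_preHilbertPoly ℚ d 0).symm
    _ ≤ Q.natDegree := natDegree_le_of_eval_natCast_isBigO hPQ
    _ ≤ p.natDegree + (p.comp (Polynomial.C 2 * Polynomial.X)).natDegree :=
        Polynomial.natDegree_mul_le
    _ = 2 * p.natDegree := by
        rw [Polynomial.natDegree_comp, Polynomial.natDegree_C_mul_X 2 two_ne_zero]; ring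

end EventuallyPolynomial

section CountingExponents

theorem isUpperSet_of_forall_add_single_mem {σ : Type*} {U : Set (σ →₀ ℕ)}
    (hU : ∀ a ∈ U, ∀ j, a + Finsupp.single j 1 ∈ U) : IsUpperSet U := by
  intro a b hab ha
  obtain ⟨c, rfl⟩ := exists_add_of_le hab
  clear hab
  induction c using Finsupp.induction_linear generalizing a with
  | zero => simpa using ha
  | add c d hc hd => exact add_assoc a c d ▸ hd (hc ha)
  | single j n =>
    induction n with
    | zero => simpa using ha
    | succ n ih => simpa [Finsupp.single_add, add_assoc] using hU _ ih j

variable {σ : Type*} [Fintype σ]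

theorem ncard_degree_le (r : ℕ) :
    {a : σ →₀ ℕ | a.degree ≤ r}.ncard = (r + Fintype.card σ).choose (Fintype.card σ) := by
  classical
  have hunion : {a : σ →₀ ℕ | a.degree ≤ r} =
      ((Finset.range (r + 1)).biUnion fun t ↦ Finset.univ.finsuppAntidiag t : Finset (σ →₀ ℕ)) := by
    ext a
    simp [Finset.mem_finsuppAntidiag, Finsupp.degree_eq_sum]
  have hdisj : ((Finset.range (r + 1) : Finset ℕ) : Set ℕ).PairwiseDisjoint
      fun t ↦ (Finset.univ.finsuppAntidiag t : Finset (σ →₀ ℕ)) := by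
    intro s _ t _ hst
    refine Finset.disjoint_left.2 fun a hs ht ↦ hst ?_
    rw [← (Finset.mem_finsuppAntidiag.1 hs).1, (Finset.mem_finsuppAntidiag.1 ht).1]
  rw [hunion, Set.ncard_coe_finset, Finset.card_biUnion hdisj]
  simp [Finset.card_finsuppAntidiag_nat_eq_multichoose, Nat.sum_range_multichoose]

theorem ncard_degree_le_and_le {b : σ →₀ ℕ} {r : ℕ} (hr : b.degree ≤ r) :
    {a : σ →₀ ℕ | a.degree ≤ r ∧ b ≤ a}.ncard =
      (r - b.degree + Fintype.card σ).choose (Fintype.card σ) := by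
  have himage : {a : σ →₀ ℕ | a.degree ≤ r ∧ b ≤ a} =
      (b + ·) '' {a : σ →₀ ℕ | a.degree ≤ r - b.degree} := by
    ext a
    constructor
    · rintro ⟨har, hba⟩
      obtain ⟨c, rfl⟩ := exists_add_of_le hba
      rw [map_add] at har
      exact ⟨c, by simp only [Set.mem_ofPred_eq]; lia, rfl⟩
    · rintro ⟨c, hc, rfl⟩
      simp only [Set.mem_ofPred_eq] at hc
      exact ⟨by rw [map_add]; lia, le_self_add⟩
  rw [himage, Set.ncard_image_of_injective _ (add_right_injective b), ncard_degree_le]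

theorem ncard_degree_le_and_forall_not_le_mem_eventuallyPolynomial
    (S : Finset (σ →₀ ℕ)) (b : σ →₀ ℕ) :
    (fun r ↦ ({a : σ →₀ ℕ | a.degree ≤ r ∧ b ≤ a ∧ ∀ s ∈ S, ¬ s ≤ a}.ncard : ℚ)) ∈
      eventuallyPolynomial (Fintype.card σ) := by
  classical
  induction S using Finset.induction_on generalizing b with
  | empty =>
    simpa using
      choose_sub_add_mem_eventuallyPolynomial _ b.degree fun _ ↦ ncard_degree_le_and_le
  | insert s S _ ih =>
    -- the exponents lost in passing from `S` to `insert s S` are those above `b ⊔ s`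
    convert Submodule.sub_mem _ (ih b) (ih (b ⊔ s)) using 1
    funext r
    have hdiff : {a : σ →₀ ℕ | a.degree ≤ r ∧ b ≤ a ∧ ∀ t ∈ insert s S, ¬ t ≤ a} =
        {a | a.degree ≤ r ∧ b ≤ a ∧ ∀ t ∈ S, ¬ t ≤ a} \
          {a | a.degree ≤ r ∧ b ⊔ s ≤ a ∧ ∀ t ∈ S, ¬ t ≤ a} := by
      ext a
      simp only [Finset.mem_insert, forall_eq_or_imp, Set.mem_ofPred_eq, Set.mem_sdiff, sup_le_iff]
      tauto
    have hsub : {a : σ →₀ ℕ | a.degree ≤ r ∧ b ⊔ s ≤ a ∧ ∀ t ∈ S, ¬ t ≤ a} ⊆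
        {a | a.degree ≤ r ∧ b ≤ a ∧ ∀ t ∈ S, ¬ t ≤ a} :=
      fun a ⟨har, hba, haS⟩ ↦ ⟨har, le_sup_left.trans hba, haS⟩
    rw [hdiff, Set.cast_ncard_sdiff hsub
      ((Finsupp.finite_of_degree_le r).subset fun a ha ↦ ha.1), Pi.sub_apply]

theorem ncard_degree_le_and_notMem_mem_eventuallyPolynomial {U : Set (σ →₀ ℕ)}
    (hU : IsUpperSet U) :
    (fun r ↦ ({a : σ →₀ ℕ | a.degree ≤ r ∧ a ∉ U}.ncard : ℚ)) ∈
      eventuallyPolynomial (Fintype.card σ) := by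
  have hfin : {a | Minimal (· ∈ U) a}.Finite :=
    WellQuasiOrderedLE.finite_of_isAntichain (setOfPred_minimal_antichain _)
  have hmem (a : σ →₀ ℕ) : a ∉ U ↔ ∀ s ∈ hfin.toFinset, ¬ s ≤ a := by
    refine ⟨fun ha s hs hsa ↦ ha (hU hsa (hfin.mem_toFinset.1 hs).prop), fun h ha ↦ ?_⟩
    obtain ⟨s, hsa, hs⟩ := exists_minimal_le_of_wellFoundedLT (· ∈ U) a ha
    exact h s (hfin.mem_toFinset.2 hs) hsa
  simpa [hmem] using ncard_degree_le_and_forall_not_le_mem_eventuallyPolynomial hfin.toFinset 0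

end CountingExponents

section StandardElements

variable {K M : Type*} [Field K] [AddCommGroup M] [Module K M]

theorem finrank_sup_span_singleton_of_notMem {p : Submodule K M} [FiniteDimensional K p] {x : M}
    (hx : x ∉ p) :
    Module.finrank K ↥(p ⊔ Submodule.span K {x}) = Module.finrank K p + 1 := by
  have hx0 : x ≠ 0 := fun h ↦ hx (h ▸ p.zero_mem)
  have hdisj := (Submodule.disjoint_span_singleton_of_notMem hx).eq_bot
  rw [← finrank_span_singleton (K := K) hx0, ← Submodule.finrank_sup_add_finrank_inf_eq, hdisj,
    finrank_bot, add_zero]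

theorem finrank_span_image_eq_ncard_notMem_span_image_lt {ι L : Type*} [LinearOrder L]
    {key : ι → L} (hkey : Function.Injective key) (v : ι → M) {S : Set ι} (hfin : S.Finite)
    (hS : ∀ a ∈ S, ∀ b, key b < key a → b ∈ S) :
    Module.finrank K (Submodule.span K (v '' S)) =
      {a ∈ S | v a ∉ Submodule.span K (v '' {b | key b < key a})}.ncard := by
  classical
  lift S to Finset ι using hfin
  induction S using Finset.induction_on_max_value key with
  | empty =>
    rw [Finset.coe_empty, Set.image_empty, Submodule.span_empty, finrank_bot]
    simp
  | insert a s has hmax ih =>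
    have hlt : {b | key b < key a} = (s : Set ι) := by
      ext b
      refine ⟨fun hb ↦ ?_, fun hb ↦ (hmax b hb).lt_of_ne (hkey.ne (by rintro rfl; exact has hb))⟩
      exact (Finset.mem_insert.1 (hS a (by simp) b hb)).resolve_left (by rintro rfl; simp at hb)
    have hs (c) (hc : c ∈ (s : Set ι)) (b) (hb : key b < key c) : b ∈ (s : Set ι) :=
      hlt ▸ hb.trans_le (hmax c hc)
    have hspan : Submodule.span K (v '' ↑(insert a s)) =
        Submodule.span K (v '' s) ⊔ Submodule.span K {v a} := by
      rw [Finset.coe_insert, Set.image_insert_eq, Submodule.span_insert, sup_comm]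
    by_cases ha : v a ∈ Submodule.span K (v '' s)
    · have hnew :
          {c ∈ (↑(insert a s) : Set ι) | v c ∉ Submodule.span K (v '' {b | key b < key c})} =
            {c ∈ (s : Set ι) | v c ∉ Submodule.span K (v '' {b | key b < key c})} := by
        ext c
        rcases eq_or_ne c a with rfl | hca <;> simp [*]
      rw [hspan, sup_eq_left.2 ((Submodule.span_singleton_le_iff_mem _ _).2 ha), hnew, ih hs]
    · have hnew :
          {c ∈ (↑(insert a s) : Set ι) | v c ∉ Submodule.span K (v '' {b | key b < key c})} =
            insert a {c ∈ (s : Set ι) | v c ∉ Submodule.span K (v '' {b | key b < key c})} := by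
        ext c
        rcases eq_or_ne c a with rfl | hca <;> simp [*]
      have := FiniteDimensional.span_of_finite K (s.finite_toSet.image v)
      rw [hspan, finrank_sup_span_singleton_of_notMem ha, hnew, ih hs,
        Set.ncard_insert_of_notMem fun h ↦ has h.1]

end StandardElements

section DegreeFiltered

variable {K M : Type*} [Field K] [AddCommGroup M] [Module K M] {σ ι : Type*}

variable (K) in
/-- The span of the vectors `v (i, a)` whose exponent `a` has degree at most `r`. -/
def degreeSpan (v : ι × (σ →₀ ℕ) → M) (r : ℕ) : Submodule K M :=
  Submodule.span K (v '' {b | b.2.degree ≤ r})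

theorem finite_setOf_snd_degree_le [Finite σ] [Finite ι] (r : ℕ) :
    {b : ι × (σ →₀ ℕ) | b.2.degree ≤ r}.Finite :=
  (Set.finite_univ.prod (Finsupp.finite_of_degree_le r)).subset fun _ hb ↦ ⟨Set.mem_univ _, hb⟩

instance finiteDimensional_degreeSpan [Finite σ] [Finite ι] (v : ι × (σ →₀ ℕ) → M) (r : ℕ) :
    FiniteDimensional K (degreeSpan K v r) :=
  FiniteDimensional.span_of_finite K ((finite_setOf_snd_degree_le r).image v)

/-- The key by which the degree-lexicographic order compares two pairs: first the exponents, then,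
in case of equality, the indices. -/
def degLexKey (b : ι × (σ →₀ ℕ)) : DegLex (σ →₀ ℕ) ×ₗ ι :=
  toLex (toDegLex b.2, b.1)

theorem degLexKey_injective : Function.Injective (degLexKey : ι × (σ →₀ ℕ) → _) := by
  rintro ⟨i, a⟩ ⟨j, b⟩ h
  simpa [degLexKey, and_comm] using h

variable [LinearOrder σ] [LinearOrder ι]

theorem degLexKey_lt_of_degree_lt {b c : ι × (σ →₀ ℕ)} (h : b.2.degree < c.2.degree) :
    degLexKey b < degLexKey c :=
  Prod.Lex.toLex_lt_toLex.2 (.inl (Finsupp.DegLex.lt_iff.2 (.inl h)))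

theorem degree_le_of_degLexKey_lt {b c : ι × (σ →₀ ℕ)} (h : degLexKey b < degLexKey c) :
    b.2.degree ≤ c.2.degree := by
  by_contra! hcb
  exact lt_asymm h (degLexKey_lt_of_degree_lt hcb)

theorem degLexKey_add_lt_add {i k : ι} {a b : σ →₀ ℕ}
    (h : degLexKey (k, b) < degLexKey (i, a)) (c : σ →₀ ℕ) :
    degLexKey (k, b + c) < degLexKey (i, a + c) := by
  rw [degLexKey, degLexKey, Prod.Lex.toLex_lt_toLex] at h ⊢
  exact h.imp (add_lt_add_left · _) (And.imp_left (congrArg (· + c)))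

variable (K) in
/-- The exponents `a` whose vector `v (i, a)` is a combination of vectors that come earlier in the
degree-lexicographic order. The other exponents are the standard ones of index `i`. -/
def nonstandardExponents (v : ι × (σ →₀ ℕ) → M) (i : ι) : Set (σ →₀ ℕ) :=
  {a | v (i, a) ∈ Submodule.span K (v '' {b | degLexKey b < degLexKey (i, a)})}

theorem finrank_degreeSpan_eq_sum_ncard [Finite σ] [Fintype ι] (v : ι × (σ →₀ ℕ) → M) (r : ℕ) :
    Module.finrank K (degreeSpan K v r) =
      ∑ i, {a : σ →₀ ℕ | a.degree ≤ r ∧ a ∉ nonstandardExponents K v i}.ncard := by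
  have hfiber (i : ι) : Finite {a : σ →₀ ℕ // a.degree ≤ r ∧ a ∉ nonstandardExponents K v i} :=
    (Finsupp.finite_of_degree_le r).subset fun a ha ↦ ha.1
  rw [degreeSpan, finrank_span_image_eq_ncard_notMem_span_image_lt degLexKey_injective v
    (finite_setOf_snd_degree_le r) fun c hc b hb ↦ (degree_le_of_degLexKey_lt hb).trans hc]
  exact (Nat.card_congr (Equiv.subtypeProdEquivSigmaSubtype fun i a ↦
    a.degree ≤ r ∧ a ∉ nonstandardExponents K v i)).trans Nat.card_sigma

theorem isUpperSet_nonstandardExponents {v : ι × (σ →₀ ℕ) → M} {T : σ → Module.End K M}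
    (hT : ∀ j i a, T j (v (i, a)) - v (i, a + Finsupp.single j 1) ∈ degreeSpan K v a.degree)
    (i : ι) : IsUpperSet (nonstandardExponents K v i) := by
  refine isUpperSet_of_forall_add_single_mem fun a ha j ↦ ?_
  let P : Submodule K M :=
    Submodule.span K (v '' {b | degLexKey b < degLexKey (i, a + .single j 1)})
  have hdeg {c : σ →₀ ℕ} (hc : c.degree ≤ a.degree) : degreeSpan K v c.degree ≤ P := by
    refine Submodule.span_mono (Set.image_mono fun b hb ↦ degLexKey_lt_of_degree_lt ?_)
    simpa using Nat.lt_succ_of_le (le_trans hb hc)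
  have hTP : Submodule.span K (v '' {b | degLexKey b < degLexKey (i, a)}) ≤ P.comap (T j) := by
    rw [Submodule.span_le]
    rintro _ ⟨⟨k, b⟩, hb, rfl⟩
    have hlead : v (k, b + .single j 1) ∈ P :=
      Submodule.subset_span ⟨_, degLexKey_add_lt_add hb _, rfl⟩
    have hrest := hdeg (degree_le_of_degLexKey_lt hb) (hT j k b)
    simpa using P.add_mem hrest hlead
  have hrest := hdeg le_rfl (hT j i a)
  change v (i, a + .single j 1) ∈ P
  simpa using P.sub_mem (hTP ha) hrest

end DegreeFiltered

theorem finrank_degreeSpan_mem_eventuallyPolynomial {K M σ ι : Type*} [Field K] [AddCommGroup M]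
    [Module K M] [Fintype σ] [Finite ι] {v : ι × (σ →₀ ℕ) → M} {T : σ → Module.End K M}
    (hT : ∀ j i a, T j (v (i, a)) - v (i, a + Finsupp.single j 1) ∈ degreeSpan K v a.degree) :
    (fun r ↦ (Module.finrank K (degreeSpan K v r) : ℚ)) ∈
      eventuallyPolynomial (Fintype.card σ) := by
  classical
  have := Fintype.ofFinite ι
  let _ : LinearOrder σ := linearOrderOfSTO WellOrderingRel
  let _ : LinearOrder ι := linearOrderOfSTO WellOrderingRel
  simp only [finrank_degreeSpan_eq_sum_ncard, Nat.cast_sum]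
  simpa only [Finset.sum_fn] using sum_mem fun i (_ : i ∈ Finset.univ) ↦
    ncard_degree_le_and_notMem_mem_eventuallyPolynomial (isUpperSet_nonstandardExponents hT i)

section TotalDegree

variable {τ : Type*}

theorem finrank_restrictTotalDegree [Fintype τ] (K : Type*) [Field K] (r : ℕ) :
    Module.finrank K (restrictTotalDegree τ K r) =
      (r + Fintype.card τ).choose (Fintype.card τ) := by
  rw [restrictTotalDegree, Module.finrank_eq_nat_card_basis (basisRestrictSupport K _)]
  exact ncard_degree_le r

theorem monotone_restrictTotalDegree {R : Type*} [CommSemiring R] :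
    Monotone (restrictTotalDegree τ R) :=
  fun _ _ hrs ↦ restrictSupport_mono R fun _ ha ↦ le_trans ha hrs

theorem X_mul_mem_restrictTotalDegree {R : Type*} [CommSemiring R] {p : MvPolynomial τ R} {r : ℕ}
    (i : τ) (hp : p ∈ restrictTotalDegree τ R r) : X i * p ∈ restrictTotalDegree τ R (r + 1) := by
  rcases subsingleton_or_nontrivial R with _ | _
  · rw [Subsingleton.elim (X i * p) 0]
    exact zero_mem _
  rw [mem_restrictTotalDegree] at hp ⊢
  have hmul := totalDegree_mul (X i) p
  rw [totalDegree_X] at hmul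
  lia

theorem pderiv_mem_restrictTotalDegree {R : Type*} [CommSemiring R] {p : MvPolynomial τ R} {r : ℕ}
    (hp : p ∈ restrictTotalDegree τ R (r + 1)) (i : τ) :
    pderiv i p ∈ restrictTotalDegree τ R r := by
  rw [restrictTotalDegree, mem_restrictSupport_iff] at hp ⊢
  intro a ha
  have hcoeff : coeff (a + Finsupp.single i 1) p ≠ 0 := fun h0 ↦
    mem_support_iff.1 ha (by rw [coeff_pderiv, h0, zero_mul])
  have hdegree : (a + Finsupp.single i 1).degree ≤ r + 1 := hp (mem_support_iff.2 hcoeff)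
  rw [map_add, Finsupp.degree_single] at hdegree
  exact Nat.le_of_succ_le_succ hdegree

theorem pderiv_comm {R : Type*} [CommRing R] (i j : τ) (p : MvPolynomial τ R) :
    pderiv i (pderiv j p) = pderiv j (pderiv i p) := by
  classical
  have hcomm : ⁅(pderiv i : Derivation R (MvPolynomial τ R) (MvPolynomial τ R)),
      (pderiv j : Derivation R (MvPolynomial τ R) (MvPolynomial τ R))⁆ = 0 :=
    derivation_ext fun k ↦ by
      simp [Derivation.commutator_apply, pderiv_X, Pi.single_apply, apply_ite]
  rw [← sub_eq_zero, ← Derivation.commutator_apply, hcomm, Derivation.zero_apply]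

theorem eq_C_of_forall_pderiv_eq_zero {R : Type*} [CommSemiring R] [NoZeroDivisors R] [CharZero R]
    {p : MvPolynomial τ R} (hp : ∀ i, pderiv i p = 0) : p = C (coeff 0 p) := by
  classical
  ext a
  rw [coeff_C]
  split_ifs with ha
  · rw [ha]
  obtain ⟨i, hi⟩ := Finsupp.ne_iff.1 (Ne.symm ha)
  obtain ⟨b, rfl⟩ : ∃ b, a = b + Finsupp.single i 1 :=
    ⟨a - Finsupp.single i 1, (tsub_add_cancel_of_le
      (Finsupp.single_le_iff.2 (Nat.one_le_iff_ne_zero.2 hi))).symm⟩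
  have hcoeff := coeff_pderiv p b (i := i)
  rw [hp i, coeff_zero] at hcoeff
  exact (mul_eq_zero.1 hcoeff.symm).resolve_right (Nat.cast_add_one_ne_zero (b i))

end TotalDegree

theorem finrank_le_mul_finrank_of_forall_apply_eq_zero {K E M N : Type*} [Field K]
    [AddCommGroup E] [Module K E] [AddCommGroup M] [Module K M] [AddCommGroup N] [Module K N]
    (B : E →ₗ[K] M →ₗ[K] N) {U : Submodule K E} {V : Submodule K M} {W : Submodule K N}
    [FiniteDimensional K V] [FiniteDimensional K W] (hB : ∀ u ∈ U, ∀ v ∈ V, B u v ∈ W)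
    (hU : ∀ u ∈ U, (∀ v ∈ V, B u v = 0) → u = 0) :
    Module.finrank K U ≤ Module.finrank K V * Module.finrank K W := by
  let f : U →ₗ[K] V →ₗ[K] W :=
    LinearMap.mk₂ K (fun u v ↦ ⟨B u v, hB u u.2 v v.2⟩) (by simp) (by simp) (by simp) (by simp)
  have hf : Function.Injective f := by
    rw [injective_iff_map_eq_zero]
    intro u hu
    exact Subtype.ext (hU u u.2 fun v hv ↦
      congrArg Subtype.val (LinearMap.congr_fun hu (⟨v, hv⟩ : V)))
  simpa only [Module.finrank_linearMap] using LinearMap.finrank_le_finrank_of_injective hf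

section CommutingFamily

variable {K A σ : Type*} [CommSemiring K] [Semiring A] [Algebra K A]

open scoped IsMulCommutative in
/-- Evaluation of polynomials at a family of commuting elements of a possibly noncommutative
algebra. -/
noncomputable def commAeval {f : σ → A} (hf : ∀ i j, Commute (f i) (f j)) :
    MvPolynomial σ K →ₐ[K] A :=
  have : IsMulCommutative (Algebra.adjoin K (Set.range f)) :=
    Algebra.isMulCommutative_adjoin K (by rintro _ ⟨i, rfl⟩ _ ⟨j, rfl⟩; exact hf i j)
  (Algebra.adjoin K (Set.range f)).val.comp
    (aeval fun i ↦ (⟨f i, Algebra.subset_adjoin ⟨i, rfl⟩⟩ : Algebra.adjoin K (Set.range f)))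

@[simp]
theorem commAeval_X {f : σ → A} (hf : ∀ i j, Commute (f i) (f j)) (i : σ) :
    commAeval (K := K) hf (X i) = f i := by
  simp [commAeval]

theorem commAeval_monomial_eq_prod_map_finRange {n : ℕ} {f : Fin n → A}
    (hf : ∀ i j, Commute (f i) (f j)) (a : Fin n →₀ ℕ) :
    commAeval hf (monomial a (1 : K)) = ((List.finRange n).map fun i ↦ f i ^ a i).prod := by
  rw [monomial_eq, C_1, one_mul, Finsupp.prod_fintype _ _ (by simp), Fin.prod_univ_def,
    map_list_prod, List.map_map]
  simp [Function.comp_def]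

end CommutingFamily

/-- Two families satisfying the canonical commutation relations of the coordinates and the partial
derivatives. -/
structure IsWeylFamily {A σ : Type*} [Ring A] [DecidableEq σ] (x d : σ → A) : Prop where
  commute_x : ∀ i j, Commute (x i) (x j)
  commute_d : ∀ i j, Commute (d i) (d j)
  d_mul_x : ∀ i j, d i * x j = x j * d i + if i = j then 1 else 0

namespace IsWeylFamily

variable {K A σ : Type*} [Field K] [Ring A] [Algebra K A] [DecidableEq σ] {x d : σ → A}
  (h : IsWeylFamily x d)

variable (K) in
/-- Normal ordering: the linear map from commutative polynomials that substitutes `x` for the left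
variables and `d` for the right ones and writes every `x` to the left of every `d`. It replaces the
expansion of a differential operator in the monomials `x^α d^β`. -/
noncomputable def normalOrder : MvPolynomial (σ ⊕ σ) K →ₗ[K] A :=
  (basisMonomials (σ ⊕ σ) K).constr K fun a ↦
    commAeval h.commute_x (monomial (Finsupp.sumFinsuppAddEquivProdFinsupp a).1 (1 : K)) *
      commAeval h.commute_d (monomial (Finsupp.sumFinsuppAddEquivProdFinsupp a).2 (1 : K))

theorem normalOrder_monomial (a : σ ⊕ σ →₀ ℕ) :
    h.normalOrder K (monomial a 1) =
      commAeval h.commute_x (monomial (Finsupp.sumFinsuppAddEquivProdFinsupp a).1 (1 : K)) *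
        commAeval h.commute_d (monomial (Finsupp.sumFinsuppAddEquivProdFinsupp a).2 (1 : K)) :=
  (basisMonomials (σ ⊕ σ) K).constr_basis K _ a

theorem normalOrder_one : h.normalOrder K 1 = 1 := by
  rw [← C_1, C_apply, normalOrder_monomial]
  simp

theorem normalOrder_C (c : K) : h.normalOrder K (C c) = algebraMap K A c := by
  rw [← mul_one (C c), C_mul', map_smul, normalOrder_one, Algebra.algebraMap_eq_smul_one]

theorem normalOrder_X_inl_mul (i : σ) (p : MvPolynomial (σ ⊕ σ) K) :
    h.normalOrder K (X (.inl i) * p) = x i * h.normalOrder K p := by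
  suffices h.normalOrder K ∘ₗ LinearMap.mulLeft K (X (.inl i)) =
      LinearMap.mulLeft K (x i) ∘ₗ h.normalOrder K from LinearMap.congr_fun this p
  refine (basisMonomials (σ ⊕ σ) K).ext fun a ↦ ?_
  have hsplit : Finsupp.sumFinsuppAddEquivProdFinsupp (Finsupp.single (.inl i : σ ⊕ σ) 1) =
      (Finsupp.single i 1, (0 : σ →₀ ℕ)) := by
    ext <;> simp [Finsupp.single_apply]
  simp only [coe_basisMonomials, LinearMap.comp_apply, LinearMap.mulLeft_apply, X, monomial_mul,
    mul_one, normalOrder_monomial, map_add, hsplit, Prod.fst_add, Prod.snd_add, zero_add]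
  rw [monomial_single_add, pow_one, map_mul, commAeval_X, mul_assoc]

theorem normalOrder_X_inr_mul (i : σ) (p : MvPolynomial (σ ⊕ σ) K) :
    h.normalOrder K (X (.inr i) * p) = h.normalOrder K p * d i := by
  suffices h.normalOrder K ∘ₗ LinearMap.mulLeft K (X (.inr i)) =
      LinearMap.mulRight K (d i) ∘ₗ h.normalOrder K from LinearMap.congr_fun this p
  refine (basisMonomials (σ ⊕ σ) K).ext fun a ↦ ?_
  have hsplit : Finsupp.sumFinsuppAddEquivProdFinsupp (Finsupp.single (.inr i : σ ⊕ σ) 1) =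
      ((0 : σ →₀ ℕ), Finsupp.single i 1) := by
    ext <;> simp [Finsupp.single_apply]
  simp only [coe_basisMonomials, LinearMap.comp_apply, LinearMap.mulLeft_apply,
    LinearMap.mulRight_apply, X, monomial_mul, mul_one, normalOrder_monomial, map_add, hsplit,
    Prod.fst_add, Prod.snd_add, zero_add]
  rw [add_comm, monomial_add_single, pow_one, map_mul, commAeval_X, mul_assoc]

theorem normalOrder_pderiv_inl (i : σ) (p : MvPolynomial (σ ⊕ σ) K) :
    h.normalOrder K (pderiv (.inl i) p) = d i * h.normalOrder K p - h.normalOrder K p * d i := by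
  induction p using MvPolynomial.induction_on with
  | C c => simp [normalOrder_C, Algebra.commutes]
  | add p q hp hq => simp only [map_add, hp, hq]; noncomm_ring
  | mul_X p j hp =>
    rw [mul_comm p, Derivation.leibniz, smul_eq_mul, smul_eq_mul, map_add]
    cases j with
    | inl j =>
      rw [normalOrder_X_inl_mul, normalOrder_X_inl_mul, hp, ← mul_assoc, h.d_mul_x]
      rcases eq_or_ne i j with rfl | hij
      · simp only [pderiv_X_self, mul_one, ↓reduceIte]
        noncomm_ring
      · rw [pderiv_X_of_ne (Sum.inl_injective.ne hij.symm), if_neg hij, mul_zero, map_zero]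
        noncomm_ring
    | inr j =>
      rw [normalOrder_X_inr_mul, normalOrder_X_inr_mul, hp]
      simp [mul_assoc, (h.commute_d i j).eq, sub_mul]

theorem normalOrder_pderiv_inr (i : σ) (p : MvPolynomial (σ ⊕ σ) K) :
    h.normalOrder K (pderiv (.inr i) p) = h.normalOrder K p * x i - x i * h.normalOrder K p := by
  induction p using MvPolynomial.induction_on with
  | C c => simp [normalOrder_C, Algebra.commutes]
  | add p q hp hq => simp only [map_add, hp, hq]; noncomm_ring
  | mul_X p j hp =>
    rw [mul_comm p, Derivation.leibniz, smul_eq_mul, smul_eq_mul, map_add]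
    cases j with
    | inl j =>
      rw [normalOrder_X_inl_mul, normalOrder_X_inl_mul, hp]
      simp [← mul_assoc, (h.commute_x i j).eq, mul_sub]
    | inr j =>
      rw [normalOrder_X_inr_mul, normalOrder_X_inr_mul, hp, mul_assoc, h.d_mul_x]
      rcases eq_or_ne j i with rfl | hij
      · simp only [pderiv_X_self, mul_one, ↓reduceIte]
        noncomm_ring
      · rw [pderiv_X_of_ne (Sum.inr_injective.ne hij), if_neg hij, mul_zero, map_zero]
        noncomm_ring

variable (K) in
/-- The Bernstein filtration of the subalgebra generated by `x` and `d`: the combinations of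
normally ordered monomials of total degree at most `r`. -/
noncomputable def bernsteinFiltration (r : ℕ) : Submodule K A :=
  (restrictTotalDegree (σ ⊕ σ) K r).map (h.normalOrder K)

theorem normalOrder_mem_bernsteinFiltration {p : MvPolynomial (σ ⊕ σ) K} {r : ℕ}
    (hp : p ∈ restrictTotalDegree (σ ⊕ σ) K r) : h.normalOrder K p ∈ h.bernsteinFiltration K r :=
  Submodule.mem_map_of_mem hp

theorem bernsteinFiltration_eq_span (r : ℕ) :
    h.bernsteinFiltration K r =
      Submodule.span K ((fun a ↦ h.normalOrder K (monomial a 1)) '' {a | a.degree ≤ r}) := by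
  rw [bernsteinFiltration, restrictTotalDegree, restrictSupport_eq_span, Submodule.map_span,
    Set.image_image]
  rfl

theorem bernsteinFiltration_mono : Monotone (h.bernsteinFiltration K) := fun _ _ hrs ↦
  Submodule.map_mono (monotone_restrictTotalDegree hrs)

theorem one_mem_bernsteinFiltration (r : ℕ) : 1 ∈ h.bernsteinFiltration K r := by
  rw [← h.normalOrder_one (K := K)]
  exact h.normalOrder_mem_bernsteinFiltration (by simp [mem_restrictTotalDegree])

theorem x_mul_mem_bernsteinFiltration {D : A} {r : ℕ} (i : σ)
    (hD : D ∈ h.bernsteinFiltration K r) : x i * D ∈ h.bernsteinFiltration K (r + 1) := by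
  obtain ⟨p, hp, rfl⟩ := hD
  rw [← normalOrder_X_inl_mul]
  exact h.normalOrder_mem_bernsteinFiltration (X_mul_mem_restrictTotalDegree _ hp)

theorem d_mul_mem_bernsteinFiltration {D : A} {r : ℕ} (i : σ)
    (hD : D ∈ h.bernsteinFiltration K r) : d i * D ∈ h.bernsteinFiltration K (r + 1) := by
  obtain ⟨p, hp, rfl⟩ := hD
  have hp' : p ∈ restrictTotalDegree (σ ⊕ σ) K (r + 2) :=
    monotone_restrictTotalDegree (r.le_add_right 2) hp
  have hcomm : d i * h.normalOrder K p =
      h.normalOrder K (pderiv (.inl i) p) + h.normalOrder K (X (.inr i) * p) := by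
    rw [normalOrder_pderiv_inl, normalOrder_X_inr_mul, sub_add_cancel]
  rw [hcomm]
  exact add_mem (h.normalOrder_mem_bernsteinFiltration (pderiv_mem_restrictTotalDegree hp' _))
    (h.normalOrder_mem_bernsteinFiltration (X_mul_mem_restrictTotalDegree _ hp))

theorem x_mem_bernsteinFiltration (i : σ) : x i ∈ h.bernsteinFiltration K 1 := by
  simpa using h.x_mul_mem_bernsteinFiltration i (h.one_mem_bernsteinFiltration (K := K) 0)

theorem d_mem_bernsteinFiltration (i : σ) : d i ∈ h.bernsteinFiltration K 1 := by
  simpa using h.d_mul_mem_bernsteinFiltration i (h.one_mem_bernsteinFiltration (K := K) 0)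

theorem normalOrder_monomial_mul_mem_bernsteinFiltration (a : σ ⊕ σ →₀ ℕ) {E : A} {s : ℕ}
    (hE : E ∈ h.bernsteinFiltration K s) :
    h.normalOrder K (monomial a 1) * E ∈ h.bernsteinFiltration K (a.degree + s) := by
  let U : Set (σ ⊕ σ →₀ ℕ) := {a | ∀ s, ∀ E ∈ h.bernsteinFiltration K s,
    h.normalOrder K (monomial a 1) * E ∈ h.bernsteinFiltration K (a.degree + s)}
  have hzero : 0 ∈ U := fun s E hE ↦ by
    rwa [← C_apply, C_1, normalOrder_one, one_mul, map_zero, zero_add]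
  have hadd : ∀ a ∈ U, ∀ j, a + Finsupp.single j 1 ∈ U := by
    intro a ha j s E hE
    rw [monomial_add_single, pow_one, mul_comm (monomial a _), map_add, Finsupp.degree_single]
    cases j with
    | inl j =>
      rw [normalOrder_X_inl_mul, mul_assoc, add_right_comm]
      exact h.x_mul_mem_bernsteinFiltration j (ha s E hE)
    | inr j =>
      rw [normalOrder_X_inr_mul, mul_assoc, add_assoc, add_comm 1]
      exact ha _ _ (h.d_mul_mem_bernsteinFiltration j hE)
  exact isUpperSet_of_forall_add_single_mem hadd (zero_le (a := a)) hzero s E hE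

theorem mul_mem_bernsteinFiltration {D E : A} {r s : ℕ} (hD : D ∈ h.bernsteinFiltration K r)
    (hE : E ∈ h.bernsteinFiltration K s) : D * E ∈ h.bernsteinFiltration K (r + s) := by
  suffices h.bernsteinFiltration K r ≤
      (h.bernsteinFiltration K (r + s)).comap (LinearMap.mulRight K E) from this hD
  rw [bernsteinFiltration_eq_span, Submodule.span_le]
  rintro _ ⟨a, ha, rfl⟩
  exact h.bernsteinFiltration_mono (Nat.add_le_add_right ha s)
    (h.normalOrder_monomial_mul_mem_bernsteinFiltration a hE)

theorem sumElim_mul_normalOrder_sub_mem_bernsteinFiltration (j : σ ⊕ σ) (a : σ ⊕ σ →₀ ℕ) :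
    Sum.elim x d j * h.normalOrder K (monomial a 1) -
      h.normalOrder K (monomial (a + Finsupp.single j 1) 1) ∈
        h.bernsteinFiltration K a.degree := by
  rw [monomial_add_single, pow_one, mul_comm (monomial a _)]
  cases j with
  | inl j =>
    rw [Sum.elim_inl, normalOrder_X_inl_mul, sub_self]
    exact zero_mem _
  | inr j =>
    rw [Sum.elim_inr, normalOrder_X_inr_mul, ← normalOrder_pderiv_inl]
    refine h.normalOrder_mem_bernsteinFiltration (pderiv_mem_restrictTotalDegree ?_ _)
    exact (mem_restrictTotalDegree _ _ _).2 ((totalDegree_monomial_le _ _).trans (Nat.le_succ _))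

variable {M ι : Type*} [AddCommGroup M] [Module K M] [Module A M]

variable (K) in
/-- The filtration `∑ᵢ W_r gᵢ` induced on a module by a family `g` and the Bernstein filtration. -/
def moduleFiltration (g : ι → M) (r : ℕ) : Submodule K M :=
  Submodule.span K {y | ∃ i, ∃ D ∈ h.bernsteinFiltration K r, y = D • g i}

theorem smul_mem_moduleFiltration (g : ι → M) {D : A} {r : ℕ}
    (hD : D ∈ h.bernsteinFiltration K r) (i : ι) : D • g i ∈ h.moduleFiltration K g r :=
  Submodule.subset_span ⟨i, D, hD, rfl⟩

theorem moduleFiltration_mono (g : ι → M) : Monotone (h.moduleFiltration K g) := fun _ _ hrs ↦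
  Submodule.span_mono fun _ ⟨i, D, hD, hy⟩ ↦ ⟨i, D, h.bernsteinFiltration_mono hrs hD, hy⟩

variable [IsScalarTower K A M]

theorem smul_mem_moduleFiltration_add {g : ι → M} {D : A} {y : M} {r s : ℕ}
    (hD : D ∈ h.bernsteinFiltration K r) (hy : y ∈ h.moduleFiltration K g s) :
    D • y ∈ h.moduleFiltration K g (r + s) := by
  suffices h.moduleFiltration K g s ≤
      (h.moduleFiltration K g (r + s)).comap (Algebra.lsmul K K M D) from this hy
  refine Submodule.span_le.2 ?_
  rintro _ ⟨i, E, hE, rfl⟩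
  have hDE := h.smul_mem_moduleFiltration g (h.mul_mem_bernsteinFiltration hD hE) i
  rwa [mul_smul] at hDE

theorem moduleFiltration_eq_degreeSpan (g : ι → M) :
    h.moduleFiltration K g = degreeSpan K fun b ↦ h.normalOrder K (monomial b.2 1) • g b.1 := by
  funext r
  apply le_antisymm
  · refine Submodule.span_le.2 ?_
    rintro _ ⟨i, D, hD, rfl⟩
    suffices h.bernsteinFiltration K r ≤
        (degreeSpan K (fun b : ι × (σ ⊕ σ →₀ ℕ) ↦ h.normalOrder K (monomial b.2 1) • g b.1) r).comap
          ((Algebra.lsmul K K M).toLinearMap.flip (g i)) from this hD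
    rw [bernsteinFiltration_eq_span, Submodule.span_le]
    rintro _ ⟨a, ha, rfl⟩
    exact Submodule.subset_span ⟨(i, a), ha, rfl⟩
  · refine Submodule.span_le.2 ?_
    rintro _ ⟨⟨i, a⟩, ha, rfl⟩
    exact h.smul_mem_moduleFiltration g (h.normalOrder_mem_bernsteinFiltration
      ((mem_restrictTotalDegree _ _ _).2 ((totalDegree_monomial_le _ _).trans ha))) i

theorem finrank_moduleFiltration_mem_eventuallyPolynomial [Fintype σ] [Finite ι] (g : ι → M) :
    (fun r ↦ (Module.finrank K (h.moduleFiltration K g r) : ℚ)) ∈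
      eventuallyPolynomial (2 * Fintype.card σ) := by
  rw [moduleFiltration_eq_degreeSpan, two_mul, ← Fintype.card_sum]
  refine finrank_degreeSpan_mem_eventuallyPolynomial
    (T := fun j ↦ Algebra.lsmul K K M (Sum.elim x d j)) fun j i a ↦ ?_
  have hmem := h.smul_mem_moduleFiltration g
    (h.sumElim_mul_normalOrder_sub_mem_bernsteinFiltration (K := K) j a) i
  rwa [moduleFiltration_eq_degreeSpan, sub_smul, mul_smul] at hmem

theorem eq_zero_of_forall_normalOrder_C_smul_eq_zero {g : ι → M} (hg : g ≠ 0) {r : ℕ} {c : K}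
    (hc : ∀ y ∈ h.moduleFiltration K g r, h.normalOrder K (C c) • y = 0) : c = 0 := by
  obtain ⟨i, hi⟩ := Function.ne_iff.1 hg
  have hcg := hc _ (h.smul_mem_moduleFiltration g (h.one_mem_bernsteinFiltration r) i)
  rw [one_smul, normalOrder_C, algebraMap_smul] at hcg
  exact (smul_eq_zero.1 hcg).resolve_right hi

theorem eq_zero_of_forall_normalOrder_smul_eq_zero [CharZero K] {g : ι → M} (hg : g ≠ 0) {r : ℕ} :
    ∀ p ∈ restrictTotalDegree (σ ⊕ σ) K r,
      (∀ y ∈ h.moduleFiltration K g r, h.normalOrder K p • y = 0) → p = 0 := by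
  induction r with
  | zero =>
    intro p hp hann
    rw [mem_restrictTotalDegree, Nat.le_zero, totalDegree_eq_zero_iff_eq_C] at hp
    rw [hp] at hann ⊢
    rw [h.eq_zero_of_forall_normalOrder_C_smul_eq_zero hg hann, C_0]
  | succ r ih =>
    intro p hp hann
    have hann' : ∀ y ∈ h.moduleFiltration K g r, h.normalOrder K p • y = 0 := fun y hy ↦
      hann y (h.moduleFiltration_mono g r.le_succ hy)
    have hderiv (i : σ ⊕ σ) : pderiv i p = 0 := by
      refine ih _ (pderiv_mem_restrictTotalDegree hp i) fun y hy ↦ ?_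
      cases i with
      | inl i =>
        have hdy := h.smul_mem_moduleFiltration_add (h.d_mem_bernsteinFiltration i) hy
        rw [add_comm] at hdy
        rw [normalOrder_pderiv_inl, sub_smul, mul_smul, mul_smul, hann' y hy, hann _ hdy,
          smul_zero, sub_zero]
      | inr i =>
        have hxy := h.smul_mem_moduleFiltration_add (h.x_mem_bernsteinFiltration i) hy
        rw [add_comm] at hxy
        rw [normalOrder_pderiv_inr, sub_smul, mul_smul, mul_smul, hann' y hy, hann _ hxy,
          smul_zero, sub_zero]
    rw [eq_C_of_forall_pderiv_eq_zero hderiv] at hann ⊢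
    rw [h.eq_zero_of_forall_normalOrder_C_smul_eq_zero hg hann, C_0]

theorem choose_le_finrank_mul_finrank_moduleFiltration [CharZero K] [Fintype σ] [Finite ι]
    {g : ι → M} (hg : g ≠ 0) (r : ℕ) :
    (r + 2 * Fintype.card σ).choose (2 * Fintype.card σ) ≤
      Module.finrank K (h.moduleFiltration K g r) *
        Module.finrank K (h.moduleFiltration K g (2 * r)) := by
  have hfin (s : ℕ) : FiniteDimensional K (h.moduleFiltration K g s) := by
    rw [moduleFiltration_eq_degreeSpan]
    infer_instance
  rw [two_mul, two_mul, ← Fintype.card_sum, ← finrank_restrictTotalDegree K]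
  exact finrank_le_mul_finrank_of_forall_apply_eq_zero
    ((Algebra.lsmul K K M).toLinearMap ∘ₗ h.normalOrder K)
    (fun _ hp _ hy ↦
      h.smul_mem_moduleFiltration_add (h.normalOrder_mem_bernsteinFiltration hp) hy)
    (h.eq_zero_of_forall_normalOrder_smul_eq_zero hg)

end IsWeylFamily

section WeylAlg

variable (n : ℕ) (K : Type) [Field K]

theorem isWeylFamily_wx_wd : IsWeylFamily (wx n K) (wd n K) where
  commute_x i j := Subtype.ext <| LinearMap.ext fun p ↦ mul_left_comm (X i) (X j) p
  commute_d i j := Subtype.ext <| LinearMap.ext fun p ↦ pderiv_comm i j p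
  d_mul_x i j := Subtype.ext <| LinearMap.ext fun p ↦ by
    have hleibniz : pderiv i (X j * p) = X j * pderiv i p + if i = j then p else 0 := by
      rw [Derivation.leibniz, smul_eq_mul, smul_eq_mul]
      rcases eq_or_ne i j with rfl | hij
      · simp
      · simp [pderiv_X_of_ne hij.symm, hij]
    refine hleibniz.trans (congrArg (X j * pderiv i p + ·) ?_)
    split_ifs <;> rfl

variable {n}

theorem wMono_eq_normalOrder (α β : Fin n → ℕ) :
    wMono n K α β = (isWeylFamily_wx_wd n K).normalOrder K
      (monomial (Finsupp.equivFunOnFinite.symm (Sum.elim α β)) 1) := by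
  rw [IsWeylFamily.normalOrder_monomial, commAeval_monomial_eq_prod_map_finRange,
    commAeval_monomial_eq_prod_map_finRange]
  rfl

theorem bernW_natCast (r : ℕ) :
    bernW n K r = (isWeylFamily_wx_wd n K).bernsteinFiltration K r := by
  have hdegree (a : Fin n ⊕ Fin n →₀ ℕ) :
      a.degree = ordTot n (fun i ↦ a (.inl i)) (fun i ↦ a (.inr i)) := by
    rw [Finsupp.degree_eq_sum, Fintype.sum_sum_type, ordTot]
  rw [IsWeylFamily.bernsteinFiltration_eq_span, bernW]
  congr 1
  ext D
  simp only [wMono_eq_normalOrder, Nat.cast_le]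
  constructor
  · rintro ⟨α, β, hr, rfl⟩
    exact ⟨Finsupp.equivFunOnFinite.symm (Sum.elim α β), (hdegree _).trans_le hr, rfl⟩
  · rintro ⟨a, ha, rfl⟩
    refine ⟨a ∘ .inl, a ∘ .inr, (hdegree a).ge.trans ha, ?_⟩
    rw [Sum.elim_comp_inl_inr]
    simp

theorem modFil_natCast {M : Type} [AddCommGroup M] [Module K M] [Module (WeylAlg n K) M] {m : ℕ}
    (g : Fin m → M) (r : ℕ) :
    modFil n K M m g r = (isWeylFamily_wx_wd n K).moduleFiltration K g r := by
  rw [modFil, bernW_natCast]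
  rfl

end WeylAlg

theorem ne_zero_of_span_range_eq_top {R M ι : Type*} [Semiring R] [AddCommMonoid M] [Module R M]
    [Nontrivial M] {g : ι → M} (hg : Submodule.span R (Set.range g) = ⊤) : g ≠ 0 := by
  rintro rfl
  refine bot_ne_top (α := Submodule R M) ?_
  rw [← hg, eq_comm, Submodule.span_eq_bot]
  simp

theorem exists_int_forall_ge_of_eventually_natCast {P : ℤ → Prop}
    (hP : ∀ᶠ r : ℕ in atTop, P r) : ∃ s : ℤ, ∀ r, s ≤ r → P r := by
  obtain ⟨s, hs⟩ := eventually_atTop.1 hP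
  refine ⟨s, fun r hr ↦ ?_⟩
  lift r to ℕ using (Int.natCast_nonneg s).trans hr
  exact hs r (Int.ofNat_le.1 hr)

theorem statement_6_general {K A σ M ι : Type*} [Field K] [CharZero K] [Ring A] [Algebra K A]
    [DecidableEq σ] [Fintype σ] [AddCommGroup M] [Module K M] [Module A M] [IsScalarTower K A M]
    [Finite ι] {x d : σ → A} (h : IsWeylFamily x d) {g : ι → M} (hg : g ≠ 0) :
    ∃ ψ : Polynomial ℚ,
      (∀ᶠ r : ℕ in atTop, ψ.eval (r : ℚ) = (Module.finrank K (h.moduleFiltration K g r) : ℚ)) ∧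
      Fintype.card σ ≤ ψ.natDegree ∧ ψ.natDegree ≤ 2 * Fintype.card σ := by
  obtain ⟨ψ, hdegree, hψ⟩ := h.finrank_moduleFiltration_mem_eventuallyPolynomial (K := K) g
  refine ⟨ψ, hψ.mono fun r hr ↦ hr.symm, ?_, hdegree⟩
  have hψ2 : ∀ᶠ r : ℕ in atTop,
      (Module.finrank K (h.moduleFiltration K g (2 * r)) : ℚ) = ψ.eval ((2 * r : ℕ) : ℚ) :=
    (tendsto_id.const_mul_atTop' two_pos).eventually hψ
  refine Nat.le_of_mul_le_mul_left (le_two_mul_natDegree_of_choose_le ?_) two_pos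
  filter_upwards [hψ, hψ2] with r hr hr2
  rw [← hr, ← hr2]
  exact_mod_cast h.choose_le_finrank_mul_finrank_moduleFiltration hg r

theorem statement_6 (n : ℕ) (K : Type) [Field K] [CharZero K]
    (M : Type) [AddCommGroup M] [Module K M] [Module (WeylAlg n K) M]
    [IsScalarTower K (WeylAlg n K) M] [Nontrivial M]
    (m : ℕ) (g : Fin m → M)
    (hgen : Submodule.span (WeylAlg n K) (Set.range g) = ⊤) :
    ∃ ψ : Polynomial ℚ,
      (∃ s : ℤ, ∀ r : ℤ, s ≤ r →
        ψ.eval (r : ℚ) = (Module.finrank K (modFil n K M m g r) : ℚ)) ∧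
      n ≤ ψ.natDegree ∧ ψ.natDegree ≤ 2 * n := by
  obtain ⟨ψ, hψ, hdegree⟩ := statement_6_general (K := K) (isWeylFamily_wx_wd n K)
    (ne_zero_of_span_range_eq_top hgen)
  refine ⟨ψ, exists_int_forall_ge_of_eventually_natCast (hψ.mono fun r hr ↦ ?_), ?_⟩
  · rwa [modFil_natCast, Int.cast_natCast]
  · simpa only [Fintype.card_fin] using hdegree
end

section
/- Let K be a field of characteristic zero, A_n(K) the Weyl algebra with a fixed partition of {1,…,n} into blocks of sizes n_1,…,n_p, E a free left A_n(K)-module with free generators e_1,…,e_m, N an A_n(K)-submodule of E, and G = {g_1,…,g_t} a Gröbner basis of N with respect to the orders <_1,…,<_p. Then: (i) f ∈ N if and only if f (<_1,<_2,…,<_p)-reduces to 0 modulo G; and (ii) if f ∈ N and f is (<_1,<_2,…,<_p)-reduced with respect to G, then f = 0. -/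
set_option synthInstance.maxHeartbeats 400000
set_option maxHeartbeats 1000000

open MvPolynomial

/-- The `j`-th order of the monomial `x^α ∂^β` with respect to the partition `B`. -/
def ordBlk {n p : ℕ} (B : Fin n → Fin p) (α β : Fin n → ℕ) (j : Fin p) : ℕ :=
  ∑ i ∈ Finset.univ.filter (fun i => B i = j), (α i + β i)

/-- An exponent pair `(α, β)` encoding the monomial `x^α ∂^β`. -/
abbrev WExp (n : ℕ) := (Fin n → ℕ) × (Fin n → ℕ)

/-- A term `θ e_i` of the free module `E`: a monomial together with the index of a
free generator. -/
abbrev WTerm (n m : ℕ) := WExp n × Fin m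

/-- The `j`-th order of a term. -/
def ordT {n p m : ℕ} (B : Fin n → Fin p) (j : Fin p) (t : WTerm n m) : ℕ :=
  ordBlk B t.1.1 t.1.2 j

/-- The comparison vector of a monomial used to define the order `<_j`:
the `j`-th order, then the other orders, then the exponents of the `j`-th block,
then the remaining exponents. -/
def keyList {n p : ℕ} (B : Fin n → Fin p) (j : Fin p) (t : WExp n) : List ℕ :=
  [ordBlk B t.1 t.2 j] ++
  (((List.finRange p).filter fun k => k ≠ j).map (ordBlk B t.1 t.2)) ++
  (((List.finRange n).filter fun i => B i = j).map t.1) ++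
  (((List.finRange n).filter fun i => B i = j).map t.2) ++
  ((((List.finRange n).filter fun i => B i ≠ j).map fun i => [t.1 i, t.2 i]).flatten)

/-- The order `<_j` on monomials. -/
def monLt {n p : ℕ} (B : Fin n → Fin p) (j : Fin p) (s t : WExp n) : Prop :=
  List.Lex (· < ·) (keyList B j s) (keyList B j t)

/-- The order `<_j` on terms of the free module. -/
def termLt {n p m : ℕ} (B : Fin n → Fin p) (j : Fin p) (s t : WTerm n m) : Prop :=
  monLt B j s.1 t.1 ∨ (s.1 = t.1 ∧ s.2 < t.2)

/-- Divisibility of terms: same free generator and componentwise smaller exponents. -/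
def tdvd {n m : ℕ} (s t : WTerm n m) : Prop :=
  s.2 = t.2 ∧ s.1.1 ≤ t.1.1 ∧ s.1.2 ≤ t.1.2

/-- The quotient monomial `t/s` of two terms with `s ∣ t`. -/
def tquot {n m : ℕ} (t s : WTerm n m) : WExp n :=
  (t.1.1 - s.1.1, t.1.2 - s.1.2)

/-- The element `θ e_i` of the free module `E = A_n(K)^m`. -/
noncomputable def termVal {n m : ℕ} (K : Type) [Field K] (t : WTerm n m) :
    Fin m → WeylAlg n K :=
  Pi.single t.2 (wMono n K t.1.1 t.1.2)

/-- `c` is the coefficient expansion of `f ∈ E` in the basis of terms. -/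
def Represents {n m : ℕ} {K : Type} [Field K] (c : WTerm n m →₀ K)
    (f : Fin m → WeylAlg n K) : Prop :=
  f = c.sum fun t a => a • termVal K t

/-- `u` is the `j`-th leader of the element represented by `c`: the greatest term
appearing in it with respect to `<_j`. -/
def IsLeader {n p m : ℕ} {K : Type} [Field K] (B : Fin n → Fin p) (j : Fin p)
    (c : WTerm n m →₀ K) (u : WTerm n m) : Prop :=
  u ∈ c.support ∧ ∀ t ∈ c.support, t ≠ u → termLt B j t u

/-- `ρ(g) ∣ ρ(f)`, where `u g`, `u f` are the leaders of `g` and `f`: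
the first leaders divide and `d_j(g) ≤ d_j(f)` for all `j`. -/
def rhoDvd {n p m : ℕ} (B : Fin n → Fin p) (hp : 0 < p)
    (ug uf : Fin p → WTerm n m) : Prop :=
  tdvd (ug ⟨0, hp⟩) (uf ⟨0, hp⟩) ∧
  ∀ j, (ordT B j (ug j) : ℤ) - (ordT B j (ug ⟨0, hp⟩) : ℤ) ≤
       (ordT B j (uf j) : ℤ) - (ordT B j (uf ⟨0, hp⟩) : ℤ)

/-- One-step `(<_k, <_{i₁}, …, <_{i_l})`-reduction of `f` to `h` modulo `g`, where `cg`
is the expansion of `g` and `ug j` its `j`-th leader. -/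
def RedStep {n p m : ℕ} {K : Type} [Field K] (B : Fin n → Fin p)
    (k : Fin p) (is : List (Fin p))
    (g : Fin m → WeylAlg n K) (cg : WTerm n m →₀ K) (ug : Fin p → WTerm n m)
    (f h : Fin m → WeylAlg n K) : Prop :=
  ∃ cf : WTerm n m →₀ K, Represents cf f ∧
    ∃ w ∈ cf.support, tdvd (ug k) w ∧
      (∀ i ∈ is, ∀ uf : WTerm n m, IsLeader B i cf uf →
        ordBlk B (tquot w (ug k)).1 (tquot w (ug k)).2 i + ordT B i (ug i) ≤
          ordT B i uf) ∧
      h = f - (cf w * (cg (ug k))⁻¹) •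
        fun j => wMono n K (tquot w (ug k)).1 (tquot w (ug k)).2 * g j

/-- The element represented by `cf` is `(<_k, <_{i₁}, …, <_{i_l})`-reduced with respect to an
element with leaders `ug`. -/
def ReducedWrt {n p m : ℕ} {K : Type} [Field K] (B : Fin n → Fin p)
    (k : Fin p) (is : List (Fin p))
    (cf : WTerm n m →₀ K) (ug : Fin p → WTerm n m) : Prop :=
  ∀ w ∈ cf.support, tdvd (ug k) w →
    ∃ i ∈ is, ∃ uf : WTerm n m, IsLeader B i cf uf ∧
      ordT B i uf <
        ordBlk B (tquot w (ug k)).1 (tquot w (ug k)).2 i + ordT B i (ug i)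

/-!
Each order `<_j` compares additive functionals of the exponents lexicographically, the exponents
themselves among them. Hence it refines divisibility, is invariant under multiplication by monomials
and is well founded. By the Leibniz rule `∂_i x^α = x^α ∂_i + α_i x^(α - 1_i)`, multiplying
`x^α ∂^β` by a monomial adds the exponents up to proper divisors of the result, so that
multiplication by a monomial acts on `E` like a unitriangular matrix and leaders multiply as for
commuting variables. If `f ∈ N` is nonzero and `ρ(g_i) ∣ ρ(f)`, cancelling the first leader of `f`
against `g_i` therefore lowers it, and `d_j(g_i) ≤ d_j(f)` says exactly that this step respects
the order bounds of the reduction. Well-foundedness of `<_1` ends the process, which can only stop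
at `0`.
-/

section Triangular

variable {K E T : Type*} [Semiring K] [AddCommMonoid E] [Module K E] {r : T → T → Prop} {v : T → E}

/-- The span of the vectors `v t` with `t` below `w`: the lower-order parts of vectors with
leading index `w`. -/
def spanBelow (K : Type*) [Semiring K] [Module K E] (v : T → E) (r : T → T → Prop) (w : T) :
    Submodule K E :=
  Submodule.span K (v '' {t | r t w})

/-- `f` equals `a • v w` up to lower-order vectors. The coefficient `a` may vanish, so this is a
congruence rather than an assertion that `w` occurs in `f`. -/
def HasLeadingTerm (v : T → E) (r : T → T → Prop) (f : E) (a : K) (w : T) : Prop :=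
  ∃ ρ ∈ spanBelow K v r w, f = a • v w + ρ

/-- `L` is unitriangular along `σ`: it sends `v t` to `v (σ t)` up to lower-order vectors, and `σ`
is increasing. -/
structure IsTriangular (v : T → E) (r : T → T → Prop) (L : Module.End K E) (σ : T → T) : Prop where
  map_rel : ∀ {s t}, r s t → r (σ s) (σ t)
  map_basis : ∀ t, HasLeadingTerm v r (L (v t)) (1 : K) (σ t)

lemma subset_spanBelow {t w : T} (h : r t w) : v t ∈ spanBelow K v r w :=
  Submodule.subset_span ⟨t, h, rfl⟩

lemma spanBelow_mono [IsTrans T r] {s w : T} (h : r s w) :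
    spanBelow K v r s ≤ spanBelow K v r w :=
  Submodule.span_mono (Set.image_mono fun _ ht => _root_.trans ht h)

lemma exists_linearCombination_of_mem_spanBelow {f : E} {w : T} (hf : f ∈ spanBelow K v r w) :
    ∃ c : T →₀ K, Finsupp.linearCombination K v c = f ∧ ∀ t ∈ c.support, r t w := by
  obtain ⟨c, hc, hcf⟩ := (Finsupp.mem_span_image_iff_linearCombination K).1 hf
  exact ⟨c, hcf, fun t ht => hc ht⟩

lemma hasLeadingTerm_linearCombination (c : T →₀ K) (u : T)
    (hu : ∀ t ∈ c.support, t ≠ u → r t u) :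
    HasLeadingTerm v r (Finsupp.linearCombination K v c) (c u) u := by
  classical
  refine ⟨Finsupp.linearCombination K v (c.erase u), ?_, ?_⟩
  · refine Submodule.sum_mem _ fun t ht => Submodule.smul_mem _ _ (subset_spanBelow ?_)
    rw [Finsupp.support_erase, Finset.mem_erase] at ht
    exact hu t ht.2 ht.1
  · rw [← Finsupp.linearCombination_single K, ← map_add, Finsupp.single_add_erase]

namespace IsTriangular

variable {L L' : Module.End K E} {σ σ' : T → T}

lemma apply_mem_spanBelow [IsTrans T r] (hL : IsTriangular v r L σ) {f : E} {w : T}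
    (hf : f ∈ spanBelow K v r w) : L f ∈ spanBelow K v r (σ w) := by
  suffices spanBelow K v r w ≤ (spanBelow K v r (σ w)).comap L from this hf
  refine Submodule.span_le.2 ?_
  rintro _ ⟨t, ht, rfl⟩
  obtain ⟨ρ, hρ, hLt⟩ := hL.map_basis t
  rw [SetLike.mem_coe, Submodule.mem_comap, hLt]
  exact add_mem (Submodule.smul_mem _ _ (subset_spanBelow (hL.map_rel ht)))
    (spanBelow_mono (hL.map_rel ht) hρ)

lemma hasLeadingTerm [IsTrans T r] (hL : IsTriangular v r L σ) {f : E} {a : K} {w : T}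
    (hf : HasLeadingTerm v r f a w) : HasLeadingTerm v r (L f) a (σ w) := by
  obtain ⟨ρ, hρ, rfl⟩ := hf
  obtain ⟨ρ', hρ', hLw⟩ := hL.map_basis w
  refine ⟨a • ρ' + L ρ, add_mem (Submodule.smul_mem _ _ hρ') (hL.apply_mem_spanBelow hρ), ?_⟩
  rw [map_add, map_smul, hLw, one_smul, smul_add, add_assoc]

lemma one : IsTriangular v r (1 : Module.End K E) id where
  map_rel h := h
  map_basis t := ⟨0, zero_mem _, by simp⟩

lemma mul [IsTrans T r] (hL : IsTriangular v r L σ) (hL' : IsTriangular v r L' σ') :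
    IsTriangular v r (L * L') (σ ∘ σ') where
  map_rel h := hL.map_rel (hL'.map_rel h)
  map_basis t := hL.hasLeadingTerm (hL'.map_basis t)

end IsTriangular

end Triangular

lemma HasLeadingTerm.sub_mem_spanBelow {K E T : Type*} [DivisionRing K] [AddCommGroup E] [Module K E]
    {r : T → T → Prop} {v : T → E} {f g : E} {a b : K} {w : T}
    (hf : HasLeadingTerm v r f a w) (hg : HasLeadingTerm v r g b w) (hb : b ≠ 0) :
    f - (a * b⁻¹) • g ∈ spanBelow K v r w := by
  obtain ⟨ρ, hρ, rfl⟩ := hf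
  obtain ⟨ρ', hρ', rfl⟩ := hg
  rw [smul_add, smul_smul, inv_mul_cancel_right₀ hb, add_sub_add_left_eq_sub]
  exact sub_mem hρ (Submodule.smul_mem _ _ hρ')


section WeylMonomials

lemma prod_map_mul_of_commute {ι M : Type*} [Monoid M] {f g : ι → M}
    (h : ∀ i k, Commute (f i) (g k)) (l : List ι) :
    (l.map fun i => f i * g i).prod = (l.map f).prod * (l.map g).prod := by
  induction l with
  | nil => simp
  | cons i l ih =>
    have hcomm : Commute (g i) (l.map f).prod :=
      Commute.list_prod_right _ _ fun x hx => by
        obtain ⟨k, -, rfl⟩ := List.mem_map.1 hx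
        exact (h k i).symm
    simp only [List.map_cons, List.prod_cons, ih]
    rw [mul_assoc, mul_assoc, ← mul_assoc (g i), hcomm.eq, mul_assoc]

lemma mul_prod_map_pow_finRange {n : ℕ} {M : Type*} [Monoid M] {a : Fin n → M}
    (h : ∀ i k, Commute (a i) (a k)) (i : Fin n) (α : Fin n → ℕ) :
    a i * ((List.finRange n).map fun k => a k ^ α k).prod =
      ((List.finRange n).map fun k => a k ^ (α + Pi.single i 1 : Fin n → ℕ) k).prod := by
  have hai : ((List.finRange n).map fun k => a k ^ (Pi.single i 1 : Fin n → ℕ) k).prod = a i := by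
    rw [List.prod_map_eq_pow_single i _ fun k hk _ => by simp [hk],
      List.count_eq_one_of_mem (List.nodup_finRange n) (List.mem_finRange i)]
    simp
  rw [add_comm α]
  simp only [Pi.add_apply, pow_add]
  rw [prod_map_mul_of_commute fun j k => (h j k).pow_pow _ _, hai]

lemma pderiv_pderiv_comm {σ R : Type*} [CommRing R] (i k : σ) (f : MvPolynomial σ R) :
    pderiv i (pderiv k f) = pderiv k (pderiv i f) := by
  classical
  have h : ⁅(pderiv i : Derivation R (MvPolynomial σ R) (MvPolynomial σ R)), pderiv k⁆ = 0 :=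
    derivation_ext fun s => by
      rw [Derivation.commutator_apply, pderiv_X, pderiv_X, Pi.single_apply, Pi.single_apply]
      split_ifs <;> simp
  rw [← sub_eq_zero, ← Derivation.commutator_apply, h, Derivation.zero_apply]

variable {n : ℕ} {K : Type} [Field K]

lemma commute_wx (i k : Fin n) : Commute (wx n K i) (wx n K k) :=
  Subtype.ext (LinearMap.ext fun f => mul_left_comm (X i) (X k) f)

lemma commute_wd (i k : Fin n) : Commute (wd n K i) (wd n K k) :=
  Subtype.ext (LinearMap.ext fun f => pderiv_pderiv_comm i k f)

/-- The monomial `x^α` of the Weyl algebra. -/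
noncomputable def xPow (K : Type) [Field K] (α : Fin n → ℕ) : WeylAlg n K :=
  ((List.finRange n).map fun i => wx n K i ^ α i).prod

/-- The monomial `∂^β` of the Weyl algebra. -/
noncomputable def dPow (K : Type) [Field K] (β : Fin n → ℕ) : WeylAlg n K :=
  ((List.finRange n).map fun i => wd n K i ^ β i).prod

lemma xPow_mul_dPow (α β : Fin n → ℕ) : xPow K α * dPow K β = wMono n K α β := rfl

lemma wx_mul_xPow (i : Fin n) (α : Fin n → ℕ) :
    wx n K i * xPow K α = xPow K (α + Pi.single i 1) :=
  mul_prod_map_pow_finRange commute_wx i α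

lemma wd_mul_dPow (i : Fin n) (β : Fin n → ℕ) :
    wd n K i * dPow K β = dPow K (β + Pi.single i 1) :=
  mul_prod_map_pow_finRange commute_wd i β

lemma coe_xPow (α : Fin n → ℕ) :
    (xPow K α).1 = LinearMap.mulLeft K (monomial (Finsupp.equivFunOnFinite.symm α) 1) := by
  have hmono : monomial (Finsupp.equivFunOnFinite.symm α) (1 : K) =
      ((List.finRange n).map fun i => X i ^ α i).prod := by
    rw [monomial_eq, C_1, one_mul, Finsupp.prod_fintype _ _ fun _ => pow_zero _,
      Fin.prod_univ_def]
    rfl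
  change (WeylAlg n K).val _ = Algebra.lmul K _ _
  rw [hmono, xPow, map_list_prod, map_list_prod, List.map_map, List.map_map]
  congr 1
  refine List.map_congr_left fun i _ => ?_
  simp only [Function.comp_apply, map_pow]
  rfl

lemma wd_mul_xPow (i : Fin n) (α : Fin n → ℕ) :
    wd n K i * xPow K α = xPow K α * wd n K i + α i • xPow K (α - Pi.single i 1) := by
  have hsub : Finsupp.equivFunOnFinite.symm (α - Pi.single i 1) =
      Finsupp.equivFunOnFinite.symm α - Finsupp.single i 1 := by
    ext k
    simp [Finsupp.single_apply, Pi.single_apply, eq_comm]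
  refine Subtype.ext (LinearMap.ext fun f => ?_)
  change pderiv i ((xPow K α).1 f) =
    (xPow K α).1 (pderiv i f) + α i • (xPow K (α - Pi.single i 1)).1 f
  simp only [coe_xPow, LinearMap.mulLeft_apply, hsub]
  rw [pderiv_mul, pderiv_monomial, add_comm, ← smul_mul_assoc, ← map_nsmul]
  simp

lemma wMono_zero : wMono n K 0 0 = 1 := by
  simp [wMono]

lemma wx_mul_wMono (i : Fin n) (α β : Fin n → ℕ) :
    wx n K i * wMono n K α β = wMono n K (α + Pi.single i 1) β := by
  simp only [← xPow_mul_dPow, ← mul_assoc, wx_mul_xPow]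

lemma wd_mul_wMono (i : Fin n) (α β : Fin n → ℕ) :
    wd n K i * wMono n K α β =
      wMono n K α (β + Pi.single i 1) + α i • wMono n K (α - Pi.single i 1) β := by
  simp only [← xPow_mul_dPow]
  rw [← mul_assoc, wd_mul_xPow, add_mul, mul_assoc, wd_mul_dPow, smul_mul_assoc]

/-- The family of monomials `x^α ∂^β`, indexed by exponent pairs. -/
noncomputable def weylMono (K : Type) [Field K] (s : WExp n) : WeylAlg n K :=
  wMono n K s.1 s.2

/-- Left multiplication by `D` adds `θ` to the exponent of every monomial, up to proper divisors of
the resulting monomial. -/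
def HasExponent (D : WeylAlg n K) (θ : WExp n) : Prop :=
  IsTriangular (weylMono K) (· < ·) (Algebra.lmul K (WeylAlg n K) D) (θ + ·)

namespace HasExponent

lemma one : HasExponent (1 : WeylAlg n K) 0 := by
  rw [HasExponent, map_one, show ((0 : WExp n) + ·) = id from funext zero_add]
  exact IsTriangular.one

lemma mul {D D' : WeylAlg n K} {θ θ' : WExp n} (h : HasExponent D θ) (h' : HasExponent D' θ') :
    HasExponent (D * D') (θ + θ') := by
  have := IsTriangular.mul h h'
  rwa [← map_mul, show (θ + ·) ∘ (θ' + ·) = (θ + θ' + ·) from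
    funext fun s => (add_assoc θ θ' s).symm] at this

lemma list_prod {ι : Type*} {D : ι → WeylAlg n K} {θ : ι → WExp n}
    (h : ∀ i, HasExponent (D i) (θ i)) (l : List ι) :
    HasExponent (l.map D).prod (l.map θ).sum := by
  induction l with
  | nil => exact one
  | cons i l ih => simpa using (h i).mul ih

lemma pow {D : WeylAlg n K} {θ : WExp n} (h : HasExponent D θ) (k : ℕ) :
    HasExponent (D ^ k) (k • θ) := by
  simpa using list_prod (fun _ : ℕ => h) (List.range k)

end HasExponent

lemma hasExponent_wx (i : Fin n) : HasExponent (wx n K i) (Pi.single i 1, 0) where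
  map_rel h := add_lt_add_right h _
  map_basis s := by
    refine ⟨0, zero_mem _, ?_⟩
    change wx n K i * wMono n K s.1 s.2 = _
    simp [wx_mul_wMono, weylMono, add_comm]

lemma hasExponent_wd (i : Fin n) : HasExponent (wd n K i) (0, Pi.single i 1) where
  map_rel h := add_lt_add_right h _
  map_basis s := by
    have hlt : ((s.1 - Pi.single i 1, s.2) : WExp n) < (0, Pi.single i 1) + s :=
      Prod.lt_iff.2 (Or.inr ⟨by simp, lt_add_of_pos_left _ (Pi.single_pos.2 one_pos)⟩)
    refine ⟨s.1 i • weylMono K (s.1 - Pi.single i 1, s.2), nsmul_mem (subset_spanBelow hlt) _, ?_⟩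
    change wd n K i * wMono n K s.1 s.2 = _
    simp [wd_mul_wMono, weylMono, add_comm]

lemma hasExponent_weylMono (θ : WExp n) : HasExponent (weylMono K θ) θ := by
  have hx := HasExponent.list_prod (fun i => (hasExponent_wx (K := K) i).pow (θ.1 i))
    (List.finRange n)
  have hd := HasExponent.list_prod (fun i => (hasExponent_wd (K := K) i).pow (θ.2 i))
    (List.finRange n)
  have hθ : ((List.finRange n).map fun i => θ.1 i • ((Pi.single i 1, 0) : WExp n)).sum +
      ((List.finRange n).map fun i => θ.2 i • ((0, Pi.single i 1) : WExp n)).sum = θ := by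
    simp only [← Fin.sum_univ_def]
    ext k <;> simp [Prod.fst_sum, Prod.snd_sum, Finset.sum_apply, Pi.single_apply]
  have := hx.mul hd
  rwa [hθ] at this

lemma span_weylMono_mul_le :
    Submodule.span K (Set.range (weylMono (n := n) K)) * Submodule.span K (Set.range (weylMono K)) ≤
      Submodule.span K (Set.range (weylMono K)) := by
  rw [Submodule.span_mul_span, Submodule.span_le]
  rintro _ ⟨_, ⟨θ, rfl⟩, _, ⟨s, rfl⟩, rfl⟩
  obtain ⟨ρ, hρ, h⟩ := (hasExponent_weylMono (K := K) θ).map_basis s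
  change Algebra.lmul K (WeylAlg n K) _ _ ∈ Submodule.span K _
  rw [h]
  exact add_mem (Submodule.smul_mem _ _ (Submodule.subset_span ⟨_, rfl⟩))
    (Submodule.span_mono (Set.image_subset_range _ _) hρ)

lemma span_weylMono :
    Submodule.span K (Set.range (weylMono K)) = (⊤ : Submodule K (WeylAlg n K)) := by
  let S : Subalgebra K (WeylAlg n K) :=
    (Submodule.span K (Set.range (weylMono K))).toSubalgebra
      (Submodule.subset_span ⟨0, wMono_zero⟩)
      fun _ _ hx hy => span_weylMono_mul_le (Submodule.mul_mem_mul hx hy)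
  have hmono (s : WExp n) : weylMono K s ∈ S := Submodule.subset_span ⟨s, rfl⟩
  have hx (i : Fin n) : wx n K i ∈ S := by
    have h := wx_mul_wMono (K := K) i 0 0
    rw [wMono_zero, mul_one] at h
    exact h ▸ hmono (_, _)
  have hd (i : Fin n) : wd n K i ∈ S := by
    have h := wd_mul_wMono (K := K) i 0 0
    rw [wMono_zero, mul_one, Pi.zero_apply, zero_smul, add_zero] at h
    exact h ▸ hmono (_, _)
  rw [eq_top_iff]
  rintro ⟨D, hD⟩ -
  change (⟨D, hD⟩ : WeylAlg n K) ∈ S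
  induction hD using Algebra.adjoin_induction with
  | mem D hD =>
    obtain ⟨i, rfl⟩ | ⟨i, rfl⟩ := hD
    exacts [hx i, hd i]
  | algebraMap a => exact S.algebraMap_mem a
  | add D D' _ _ h h' => exact S.add_mem h h'
  | mul D D' _ _ h h' => exact S.mul_mem h h'

end WeylMonomials

section TermOrder

lemma lex_ofFn_iff_toLex_lt {α : Type*} [LT α] {L : ℕ} {f g : Fin L → α} :
    List.Lex (· < ·) (List.ofFn f) (List.ofFn g) ↔ toLex f < toLex g := by
  rw [List.lex_lt, List.lt_iff_exists]
  simp only [List.length_ofFn, lt_irrefl, and_false, false_or, List.getElem_ofFn]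
  constructor
  · rintro ⟨i, hi, _, heq, hlt⟩
    exact ⟨⟨i, hi⟩, fun k hk => heq k hk, hlt⟩
  · rintro ⟨i, heq, hlt⟩
    exact ⟨i, i.2, i.2, fun k hk => heq ⟨k, hk.trans i.2⟩ hk, hlt⟩

variable {n p m : ℕ} (B : Fin n → Fin p) (j : Fin p)

/-- The `k`-th order of a monomial, as a function of its exponents. -/
def ordHom (k : Fin p) : WExp n →+ ℕ where
  toFun s := ordBlk B s.1 s.2 k
  map_zero' := by simp [ordBlk]
  map_add' s t := by
    simp only [ordBlk, Prod.fst_add, Prod.snd_add, Pi.add_apply, ← Finset.sum_add_distrib]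
    exact Finset.sum_congr rfl fun i _ => add_add_add_comm _ _ _ _

/-- The exponent of `x_i`. -/
def xExpHom (i : Fin n) : WExp n →+ ℕ :=
  (Pi.evalAddMonoidHom (fun _ => ℕ) i).comp (AddMonoidHom.fst _ _)

/-- The exponent of `∂_i`. -/
def dExpHom (i : Fin n) : WExp n →+ ℕ :=
  (Pi.evalAddMonoidHom (fun _ => ℕ) i).comp (AddMonoidHom.snd _ _)

/-- The additive functionals whose values on a monomial are the entries of `keyList`. -/
def keyFunctionals : List (WExp n →+ ℕ) :=
  [ordHom B j] ++
  ((List.finRange p).filter fun k => k ≠ j).map (ordHom B) ++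
  ((List.finRange n).filter fun i => B i = j).map xExpHom ++
  ((List.finRange n).filter fun i => B i = j).map dExpHom ++
  (((List.finRange n).filter fun i => B i ≠ j).map fun i => [xExpHom i, dExpHom i]).flatten

/-- The vector of values of `keyFunctionals`; additive in the monomial. -/
def keyVec : WExp n →+ (Fin (keyFunctionals B j).length → ℕ) :=
  AddMonoidHom.pi fun k => (keyFunctionals B j)[k]

lemma map_keyFunctionals (s : WExp n) :
    (keyFunctionals B j).map (fun φ => φ s) = keyList B j s := by
  simp only [keyFunctionals, keyList, List.map_append, List.map_map, List.map_flatten]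
  rfl

lemma ofFn_keyVec (s : WExp n) : List.ofFn (keyVec B j s) = keyList B j s := by
  rw [← map_keyFunctionals]
  exact List.ofFn_getElem_eq_map _ fun φ : WExp n →+ ℕ => φ s

lemma keyVec_injective : Function.Injective (keyVec B j) := by
  intro s t h
  have hφ : ∀ φ ∈ keyFunctionals B j, φ s = φ t := by
    rw [← List.map_inj_left, map_keyFunctionals, map_keyFunctionals, ← ofFn_keyVec, h, ofFn_keyVec]
  have hexp (i : Fin n) : xExpHom i ∈ keyFunctionals B j ∧ dExpHom i ∈ keyFunctionals B j := by
    simp only [keyFunctionals, List.mem_append, List.mem_flatten]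
    by_cases hi : B i = j
    · have hmem : i ∈ (List.finRange n).filter fun i => B i = j := by simp [hi]
      exact ⟨.inl (.inl (.inr (List.mem_map_of_mem hmem))), .inl (.inr (List.mem_map_of_mem hmem))⟩
    · have hmem : i ∈ (List.finRange n).filter fun i => B i ≠ j := by simp [hi]
      exact ⟨.inr ⟨_, List.mem_map_of_mem hmem, by simp⟩,
        .inr ⟨_, List.mem_map_of_mem hmem, by simp⟩⟩
  exact Prod.ext (funext fun i => hφ _ (hexp i).1) (funext fun i => hφ _ (hexp i).2)

lemma keyVec_strictMono : StrictMono (keyVec B j) := by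
  refine Monotone.strictMono_of_injective (fun s t h => ?_) (keyVec_injective B j)
  obtain ⟨c, rfl⟩ := le_iff_exists_add.1 h
  rw [map_add]
  exact le_self_add

/-- The key of a term: terms are ordered by `termLt` as their keys are lexicographically. -/
def termKey (t : WTerm n m) : Lex (Fin (keyFunctionals B j).length → ℕ) ×ₗ Fin m :=
  toLex (toLex (keyVec B j t.1), t.2)

lemma termKey_injective : Function.Injective (termKey (m := m) B j) := fun s t h => by
  obtain ⟨h₁, h₂⟩ := Prod.ext_iff.1 (toLex.injective h)
  exact Prod.ext (keyVec_injective B j (toLex.injective h₁)) h₂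

lemma monLt_iff {s t : WExp n} : monLt B j s t ↔ toLex (keyVec B j s) < toLex (keyVec B j t) := by
  rw [monLt, ← ofFn_keyVec, ← ofFn_keyVec, lex_ofFn_iff_toLex_lt]

lemma termLt_iff {s t : WTerm n m} : termLt B j s t ↔ termKey B j s < termKey B j t := by
  rw [termLt, monLt_iff, termKey, termKey, Prod.Lex.toLex_lt_toLex, toLex_inj,
    (keyVec_injective B j).eq_iff]

instance : IsTrans (WTerm n m) (termLt B j) where
  trans s t u h h' := by
    rw [termLt_iff] at *
    exact h.trans h'

lemma wellFounded_termLt : WellFounded (termLt (m := m) B j) :=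
  Subrelation.wf (termLt_iff B j).1 (InvImage.wf (termKey B j) wellFounded_lt)

variable {B j}

lemma monLt_of_lt {s t : WExp n} (h : s < t) : monLt B j s t :=
  (monLt_iff B j).2 (Pi.toLex_strictMono (keyVec_strictMono B j h))

lemma monLt.add_left {s t : WExp n} (h : monLt B j s t) (θ : WExp n) :
    monLt B j (θ + s) (θ + t) := by
  rw [monLt_iff, map_add (keyVec B j), map_add (keyVec B j)]
  exact add_lt_add_right ((monLt_iff B j).1 h) _

lemma termLt.add_left {s t : WTerm n m} (h : termLt B j s t) (θ : WExp n) :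
    termLt B j (θ + s.1, s.2) (θ + t.1, t.2) :=
  h.imp (fun h => h.add_left θ) fun h => ⟨congrArg (θ + ·) h.1, h.2⟩

lemma tquot_add_cancel {u w : WTerm n m} (h : tdvd u w) : tquot w u + u.1 = w.1 :=
  Prod.ext (tsub_add_cancel_of_le h.2.1) (tsub_add_cancel_of_le h.2.2)

lemma ordBlk_tquot_add_ordT {u w : WTerm n m} (h : tdvd u w) :
    ordBlk B (tquot w u).1 (tquot w u).2 j + ordT B j u = ordT B j w := by
  change ordHom B j (tquot w u) + ordHom B j u.1 = ordHom B j w.1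
  rw [← map_add, tquot_add_cancel h]

end TermOrder

section Leaders

variable {n p m : ℕ} {K : Type} [Field K] {B : Fin n → Fin p} {j : Fin p}
  {c : WTerm n m →₀ K} {f g : Fin m → WeylAlg n K} {u w : WTerm n m}

lemma represents_iff : Represents c f ↔ Finsupp.linearCombination K (termVal K) c = f :=
  eq_comm

lemma Represents.ne_zero (h : Represents c f) (hf : f ≠ 0) : c ≠ 0 := by
  rintro rfl
  exact hf (by simpa [represents_iff, eq_comm] using h)

lemma exists_represents (f : Fin m → WeylAlg n K) : ∃ c : WTerm n m →₀ K, Represents c f := by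
  suffices f ∈ Submodule.span K (Set.range (termVal (n := n) (m := m) K)) by
    rw [← Finsupp.range_linearCombination] at this
    exact this.imp fun _ => represents_iff.2
  rw [← Finset.univ_sum_single f]
  refine Submodule.sum_mem _ fun i _ => ?_
  suffices (⊤ : Submodule K (WeylAlg n K)).map (LinearMap.single K _ i) ≤
      Submodule.span K (Set.range (termVal (n := n) (m := m) K)) from
    this (Submodule.mem_map_of_mem Submodule.mem_top)
  rw [← span_weylMono, Submodule.map_span, ← Set.range_comp]
  refine Submodule.span_mono ?_
  rintro _ ⟨s, rfl⟩
  exact ⟨(s, i), rfl⟩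

lemma exists_isLeader (B : Fin n → Fin p) (j : Fin p) (hc : c ≠ 0) : ∃ u, IsLeader B j c u := by
  obtain ⟨u, hu, hmax⟩ := Finset.exists_max_image c.support (termKey B j)
    (Finsupp.support_nonempty_iff.2 hc)
  exact ⟨u, hu, fun t ht htu => (termLt_iff B j).2
    ((hmax t ht).lt_of_ne ((termKey_injective B j).ne htu))⟩

lemma exists_isLeader_of_represents (B : Fin n → Fin p) (hc : Represents c f) (hf : f ≠ 0) :
    ∃ uf : Fin p → WTerm n m, ∀ j, IsLeader B j c (uf j) :=
  Classical.axiomOfChoice fun j => exists_isLeader B j (hc.ne_zero hf)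

lemma IsLeader.unique (hu : IsLeader B j c u) (hw : IsLeader B j c w) : u = w := by
  by_contra h
  exact (wellFounded_termLt B j).asymmetric _ _ (hu.2 w hw.1 (Ne.symm h)) (hw.2 u hu.1 h)

lemma IsLeader.hasLeadingTerm (hu : IsLeader B j c u) (hc : Represents c f) :
    HasLeadingTerm (termVal K) (termLt B j) f (c u) u :=
  represents_iff.1 hc ▸ hasLeadingTerm_linearCombination c u hu.2

lemma isTriangular_lsmul_weylMono (B : Fin n → Fin p) (j : Fin p) (θ : WExp n) :
    IsTriangular (termVal K) (termLt B j)
      (Algebra.lsmul K K (Fin m → WeylAlg n K) (weylMono K θ)) fun t => (θ + t.1, t.2) where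
  map_rel h := h.add_left θ
  map_basis t := by
    obtain ⟨ρ, hρ, h⟩ := (hasExponent_weylMono (K := K) θ).map_basis t.1
    refine ⟨Pi.single t.2 ρ, ?_, ?_⟩
    · have hmap := Submodule.mem_map_of_mem
        (f := LinearMap.single K (fun _ : Fin m => WeylAlg n K) t.2) hρ
      rw [spanBelow, Submodule.map_span] at hmap
      refine Submodule.span_mono ?_ hmap
      rintro _ ⟨_, ⟨s, hs, rfl⟩, rfl⟩
      exact ⟨(s, t.2), .inl (monLt_of_lt hs), rfl⟩
    · change weylMono K θ • Pi.single t.2 (weylMono K t.1) =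
        (1 : K) • (Pi.single t.2 (weylMono K (θ + t.1)) : Fin m → WeylAlg n K) + Pi.single t.2 ρ
      rw [← Pi.single_smul, ← Pi.single_smul, ← Pi.single_add]
      exact congrArg _ h

lemma HasLeadingTerm.weylMono_smul {a : K} (hu : HasLeadingTerm (termVal K) (termLt B j) g a u)
    (h : tdvd u w) :
    HasLeadingTerm (termVal K) (termLt B j) (weylMono K (tquot w u) • g) a w := by
  have := (isTriangular_lsmul_weylMono B j (tquot w u)).hasLeadingTerm hu
  rwa [tquot_add_cancel h, h.1] at this

lemma rhoDvd.ordBlk_tquot_add_le {hp : 0 < p} {ug uf : Fin p → WTerm n m}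
    (h : rhoDvd B hp ug uf) (j : Fin p) :
    ordBlk B (tquot (uf ⟨0, hp⟩) (ug ⟨0, hp⟩)).1 (tquot (uf ⟨0, hp⟩) (ug ⟨0, hp⟩)).2 j +
      ordT B j (ug j) ≤ ordT B j (uf j) := by
  have hquot := ordBlk_tquot_add_ordT (B := B) (j := j) h.1
  have hd := h.2 j
  omega

end Leaders

section GroebnerBasis

variable {n p m : ℕ} {K : Type} [Field K] {B : Fin n → Fin p} {hp : 0 < p} {is : List (Fin p)}
  {N : Submodule (WeylAlg n K) (Fin m → WeylAlg n K)} {ι : Type*}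
  {g : ι → Fin m → WeylAlg n K} {cg : ι → WTerm n m →₀ K} {ug : ι → Fin p → WTerm n m}

/-- A family with leaders `ug` is a Gröbner basis of `N`: every nonzero `f ∈ N` satisfies
`ρ(g_i) ∣ ρ(f)` for some `i`. Only the leaders of the family enter the definition. -/
def IsGroebnerBasis (B : Fin n → Fin p) (hp : 0 < p)
    (N : Submodule (WeylAlg n K) (Fin m → WeylAlg n K)) (ug : ι → Fin p → WTerm n m) : Prop :=
  ∀ f ∈ N, f ≠ 0 → ∀ (cf : WTerm n m →₀ K) (uf : Fin p → WTerm n m),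
    Represents cf f → (∀ j, IsLeader B j cf (uf j)) → ∃ i, rhoDvd B hp (ug i) uf

/-- One-step reduction modulo a family, with expansions `cg` and leaders `ug`, with respect to the
first order and the orders in `is`. -/
def RedStepModulo (B : Fin n → Fin p) (hp : 0 < p) (is : List (Fin p))
    (g : ι → Fin m → WeylAlg n K) (cg : ι → WTerm n m →₀ K) (ug : ι → Fin p → WTerm n m)
    (f h : Fin m → WeylAlg n K) : Prop :=
  ∃ i, RedStep B ⟨0, hp⟩ is (g i) (cg i) (ug i) f h

lemma smul_weylMono_smul_mem (a : K) (θ : WExp n) {f : Fin m → WeylAlg n K} (hf : f ∈ N) :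
    a • weylMono K θ • f ∈ N :=
  N.smul_of_tower_mem a (N.smul_mem _ hf)

lemma RedStepModulo.mem_iff (hgN : ∀ i, g i ∈ N) {f h : Fin m → WeylAlg n K}
    (hr : RedStepModulo B hp is g cg ug f h) : h ∈ N ↔ f ∈ N := by
  obtain ⟨i, cf, -, w, -, -, -, rfl⟩ := hr
  set z := (cf w * (cg i (ug i ⟨0, hp⟩))⁻¹) • weylMono K (tquot w (ug i ⟨0, hp⟩)) • g i
  have hz : z ∈ N := smul_weylMono_smul_mem _ _ (hgN i)
  -- The subtraction of `E` and its module structure carry different instances of the same additive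
  -- structure; they unify only once `R` and `M` are known.
  exact Submodule.sub_mem_iff_left (R := WeylAlg n K) (M := Fin m → WeylAlg n K) N hz

lemma exists_redStepModulo (hrep : ∀ i, Represents (cg i) (g i))
    (hlead : ∀ i, IsLeader B ⟨0, hp⟩ (cg i) (ug i ⟨0, hp⟩)) (hGB : IsGroebnerBasis B hp N ug)
    {f : Fin m → WeylAlg n K} (hf : f ∈ N) (hf0 : f ≠ 0) {c : WTerm n m →₀ K}
    (hc : Represents c f) {u : WTerm n m} (hu : IsLeader B ⟨0, hp⟩ c u) :
    ∃ h, RedStepModulo B hp is g cg ug f h ∧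
      h ∈ spanBelow K (termVal K) (termLt B ⟨0, hp⟩) u := by
  obtain ⟨uf, huf⟩ := exists_isLeader_of_represents B hc hf0
  obtain ⟨i, hi⟩ := hGB f hf hf0 c uf hc huf
  obtain rfl := hu.unique (huf _)
  refine ⟨_, ⟨i, c, hc, _, hu.1, hi.1, fun j _ v hv => ?_, rfl⟩, ?_⟩
  · exact (huf j).unique hv ▸ hi.ordBlk_tquot_add_le j
  · have hlt := ((hlead i).hasLeadingTerm (hrep i)).weylMono_smul hi.1
    exact HasLeadingTerm.sub_mem_spanBelow (E := Fin m → WeylAlg n K) (hu.hasLeadingTerm hc) hlt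
      (Finsupp.mem_support_iff.1 (hlead i).1)

lemma reflTransGen_redStepModulo_of_mem (hgN : ∀ i, g i ∈ N)
    (hrep : ∀ i, Represents (cg i) (g i))
    (hlead : ∀ i, IsLeader B ⟨0, hp⟩ (cg i) (ug i ⟨0, hp⟩)) (hGB : IsGroebnerBasis B hp N ug)
    {f : Fin m → WeylAlg n K} (hf : f ∈ N) :
    Relation.ReflTransGen (RedStepModulo B hp is g cg ug) f 0 := by
  obtain rfl | hf0 := eq_or_ne f 0
  · rfl
  obtain ⟨c, hc⟩ := exists_represents f
  obtain ⟨u, hu⟩ := exists_isLeader B ⟨0, hp⟩ (hc.ne_zero hf0)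
  induction u using (wellFounded_termLt B ⟨0, hp⟩).induction generalizing f c with
  | _ u ih =>
    obtain ⟨h, hfh, hlow⟩ := exists_redStepModulo (is := is) hrep hlead hGB hf hf0 hc hu
    refine .head hfh ?_
    obtain rfl | hh0 := eq_or_ne h 0
    · rfl
    obtain ⟨ch, hch, hsupp⟩ := exists_linearCombination_of_mem_spanBelow hlow
    have hch : Represents ch h := represents_iff.2 hch
    obtain ⟨v, hv⟩ := exists_isLeader B ⟨0, hp⟩ (hch.ne_zero hh0)
    exact ih v (hsupp v hv.1) ((hfh.mem_iff hgN).2 hf) hh0 ch hch hv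

lemma mem_of_reflTransGen_redStepModulo (hgN : ∀ i, g i ∈ N) {f : Fin m → WeylAlg n K}
    (hf : Relation.ReflTransGen (RedStepModulo B hp is g cg ug) f 0) : f ∈ N := by
  induction hf using Relation.ReflTransGen.head_induction_on with
  | refl => exact zero_mem N
  | head hstep _ ih => exact (hstep.mem_iff hgN).1 ih

lemma eq_zero_of_reducedWrt (hGB : IsGroebnerBasis B hp N ug) {f : Fin m → WeylAlg n K}
    (hf : f ∈ N) {cf : WTerm n m →₀ K} (hcf : Represents cf f)
    (hred : ∀ i, ReducedWrt B ⟨0, hp⟩ is cf (ug i)) : f = 0 := by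
  by_contra hf0
  obtain ⟨uf, huf⟩ := exists_isLeader_of_represents B hcf hf0
  obtain ⟨i, hi⟩ := hGB f hf hf0 cf uf hcf huf
  obtain ⟨j, -, v, hv, hlt⟩ := hred i _ (huf _).1 hi.1
  exact hlt.not_ge ((huf j).unique hv ▸ hi.ordBlk_tquot_add_le j)

end GroebnerBasis

theorem statement_13_general {n p m : ℕ} (hp : 0 < p) {K : Type} [Field K] (B : Fin n → Fin p)
    (is : List (Fin p)) (N : Submodule (WeylAlg n K) (Fin m → WeylAlg n K)) {ι : Type*}
    (g : ι → Fin m → WeylAlg n K) (hgN : ∀ i, g i ∈ N)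
    (cg : ι → WTerm n m →₀ K) (ug : ι → Fin p → WTerm n m)
    (hrep : ∀ i, Represents (cg i) (g i))
    (hlead : ∀ i j, IsLeader B j (cg i) (ug i j))
    (hGB : IsGroebnerBasis B hp N ug) :
    (∀ f, f ∈ N ↔ Relation.ReflTransGen (RedStepModulo B hp is g cg ug) f 0) ∧
    (∀ f ∈ N, ∀ cf : WTerm n m →₀ K, Represents cf f →
      (∀ i, ReducedWrt B ⟨0, hp⟩ is cf (ug i)) → f = 0) :=
  ⟨fun _ => ⟨reflTransGen_redStepModulo_of_mem hgN hrep (fun i => hlead i _) hGB,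
      mem_of_reflTransGen_redStepModulo hgN⟩,
    fun _ hf _ hcf hred => eq_zero_of_reducedWrt hGB hf hcf hred⟩

theorem statement_13 (n p m t : ℕ) (hp : 0 < p) (K : Type) [Field K] [CharZero K]
    (nn : Fin p → ℕ) (hn : ∑ j, nn j = n)
    (B : Fin n → Fin p) (hBmono : Monotone B)
    (hBcard : ∀ j, (Finset.univ.filter fun i => B i = j).card = nn j)
    (N : Submodule (WeylAlg n K) (Fin m → WeylAlg n K))
    (g : Fin t → Fin m → WeylAlg n K) (hgN : ∀ i, g i ∈ N) (hg0 : ∀ i, g i ≠ 0)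
    (cg : Fin t → (WTerm n m →₀ K)) (ug : Fin t → Fin p → WTerm n m)
    (hrep : ∀ i, Represents (cg i) (g i))
    (hlead : ∀ i j, IsLeader B j (cg i) (ug i j))
    (hGB : ∀ f ∈ N, f ≠ 0 → ∀ (cf : WTerm n m →₀ K) (uf : Fin p → WTerm n m),
      Represents cf f → (∀ j, IsLeader B j cf (uf j)) →
      ∃ i, rhoDvd B hp (ug i) uf) :
    (∀ f : Fin m → WeylAlg n K,
      f ∈ N ↔
        Relation.ReflTransGen
          (fun x y => ∃ i, RedStep B ⟨0, hp⟩ ((List.finRange p).tail)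
            (g i) (cg i) (ug i) x y) f 0) ∧
    (∀ f ∈ N, ∀ cf : WTerm n m →₀ K, Represents cf f →
      (∀ i, ReducedWrt B ⟨0, hp⟩ ((List.finRange p).tail) cf (ug i)) → f = 0) :=
  statement_13_general hp B _ N g hgN cg ug hrep hlead hGB
end
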